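/- Let k ≥ 2 and 0 < n < 2k−2 be integers. For every τ ∈ ℍ∖E₁ one has ξ_{2−2k}H_{1−k,n}(τ) = −R_n(τ) and 𝒟^{2k−1}H_{1−k,n}(τ) = (−1)^{n+1}·((2k−2)!/(4π)^{2k−1})·R_n(τ). -/

import Mathlib

open Complex MeasureTheory
open scoped Real

noncomputable section

namespace LHMF

abbrev SL2Z := Matrix.SpecialLinearGroup (Fin 2) ℤ

/-- Möbius action of `SL₂(ℤ)` on `ℂ`. -/
def moeb (M : SL2Z) (τ : ℂ) : ℂ :=
  ((M.1 0 0 : ℂ) * τ + (M.1 0 1 : ℂ)) / ((M.1 1 0 : ℂ) * τ + (M.1 1 1 : ℂ))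

/-- Automorphy factor `j(M,τ) = cτ + d`. -/
def jfac (M : SL2Z) (τ : ℂ) : ℂ := (M.1 1 0 : ℂ) * τ + (M.1 1 1 : ℂ)

/-- `E₁`: union of all `SL₂(ℤ)`-translates of the positive imaginary axis. -/
def E1 : Set ℂ := ⋃ M : SL2Z, (fun y : ℝ => moeb M ((y : ℂ) * Complex.I)) '' Set.Ioi 0

/-- Wirtinger derivative `∂f/∂τ`. -/
def dtau (f : ℂ → ℂ) (τ : ℂ) : ℂ :=
  (fderiv ℝ f τ 1 - Complex.I * fderiv ℝ f τ Complex.I) / 2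

/-- Wirtinger derivative `∂f/∂τ̄`. -/
def dtaubar (f : ℂ → ℂ) (τ : ℂ) : ℂ :=
  (fderiv ℝ f τ 1 + Complex.I * fderiv ℝ f τ Complex.I) / 2

/-- The operator `ξ_κ f = 2i v^κ conj(∂f/∂τ̄)`. -/
def xiOp (κ : ℤ) (f : ℂ → ℂ) (τ : ℂ) : ℂ :=
  2 * Complex.I * ((τ.im : ℂ) ^ κ) * starRingEnd ℂ (dtaubar f τ)

/-- The operator `𝒟 = (1/(2πi)) ∂/∂τ`. -/
def Dop (f : ℂ → ℂ) : ℂ → ℂ := fun τ => (2 * (π : ℂ) * Complex.I)⁻¹ * dtau f τ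

/-- Maass raising operator of weight `κ`. -/
def raiseOp (κ : ℤ) (f : ℂ → ℂ) (τ : ℂ) : ℂ :=
  2 * Complex.I * dtau f τ + (κ : ℂ) * (τ.im : ℂ)⁻¹ * f τ

/-- Iterated raising operator `R_κ^m = R_{κ+2m-2} ∘ ⋯ ∘ R_{κ+2} ∘ R_κ`. -/
def raiseIter (κ : ℤ) : ℕ → (ℂ → ℂ) → (ℂ → ℂ)
  | 0 => fun f => f
  | m + 1 => fun f => raiseOp (κ + 2 * m) (raiseIter κ m f)

/-- Petersson's Poincaré series `H_{k,k-1}(z,τ)`. -/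
def Hpet (k : ℕ) (z τ : ℂ) : ℂ :=
  ∑' M : SL2Z, jfac M τ ^ (2 * k - 2) * ((moeb M τ).im : ℂ) ^ (2 * k - 1) *
    (z - moeb M τ)⁻¹ * (z - starRingEnd ℂ (moeb M τ)) ^ (1 - 2 * (k : ℤ))

/-- The locally harmonic Maass form `H_{1-k,n}`. -/
def Hlhmf (k n : ℕ) (τ : ℂ) : ℂ :=
  (2 * Complex.I) ^ (2 * k - 2) / (2 * (π : ℂ)) *
    ∫ y in Set.Ioi (0 : ℝ), Hpet k ((y : ℂ) * Complex.I) τ * (y : ℂ) ^ n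

/-- The cusp form `R_n` of weight `2k`. -/
def Rnform (k n : ℕ) (τ : ℂ) : ℂ :=
  (2 : ℂ) ^ (2 * k - 3) / (Complex.I ^ (2 * k - 1 - n) * (Nat.choose (2 * k - 2) n : ℂ) * (π : ℂ)) *
    ∑' M : SL2Z, jfac M τ ^ (-2 * (k : ℤ)) * moeb M τ ^ (-(n : ℤ) - 1)

/-- Holomorphic Eichler integral of `f` (weight `2k`), along a vertical path. -/
def eichlerHol (k : ℕ) (f : ℂ → ℂ) (τ : ℂ) : ℂ :=
  (-2 * (π : ℂ) * Complex.I) ^ (2 * k - 1) / (Nat.factorial (2 * k - 2) : ℂ) *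
    ∫ t in Set.Ioi (0 : ℝ), f (τ + (t : ℂ) * Complex.I) * ((t : ℂ) * Complex.I) ^ (2 * k - 2) *
      Complex.I

/-- Non-holomorphic Eichler integral `f^*` of `f` (weight `2k`), along a vertical path. -/
def eichlerStar (k : ℕ) (f : ℂ → ℂ) (τ : ℂ) : ℂ :=
  (-2 * Complex.I) ^ (1 - 2 * (k : ℤ)) *
    ∫ t in Set.Ioi (0 : ℝ),
      starRingEnd ℂ (f (-(starRingEnd ℂ (-(starRingEnd ℂ τ) + (t : ℂ) * Complex.I)))) *
        (-(starRingEnd ℂ τ) + (t : ℂ) * Complex.I + τ) ^ (2 * k - 2) * Complex.I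

/-- Bernoulli polynomial evaluated at a complex number. -/
def bernC (m : ℕ) (τ : ℂ) : ℂ := Polynomial.aeval τ (Polynomial.bernoulli m)

/-- Periodized Bernoulli polynomial `𝔹_m(τ) = B_m(τ - ⌊Re τ⌋)`. -/
def bernPer (m : ℕ) (τ : ℂ) : ℂ := bernC m (τ - (⌊τ.re⌋ : ℂ))

/-- The period `r_n(E_{2k})` of the Eisenstein series, for `0 < n < 2k-2`. -/
def rnE (k n : ℕ) : ℚ :=
  if n % 2 = 0 then 0
  else (-1) ^ ((n - 1) / 2) * (2 * (k : ℚ)) * bernoulli (n + 1) * bernoulli (2 * k - 1 - n) /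
    (bernoulli (2 * k) * ((n : ℚ) + 1) * ((2 * k - 1 - n : ℕ) : ℚ))

/-- The local polynomial `P_{1-k,n}`. -/
def Ppoly (k n : ℕ) (τ : ℂ) : ℂ :=
  (rnE k n : ℂ)
  + (-Complex.I) ^ (n + 1) / ((n : ℂ) + 1) * bernPer (n + 1) τ
  + Complex.I ^ (n + 1) / ((2 * k - 1 - n : ℕ) : ℂ) * bernPer (2 * k - 1 - n) τ
  + Complex.I ^ (1 - (n : ℤ)) / 2 *
      ∑' M : {M : SL2Z // 0 < M.1 0 0 * M.1 1 0 ∧ (moeb M τ).re < 0},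
        jfac M.1 τ ^ (2 * k - 2) *
          (moeb M.1 τ ^ n - (-1 : ℂ) ^ n * moeb M.1 τ ^ (2 * k - 2 - n))

/-- The binary quadratic form `[a,b,c]` evaluated at complex arguments. -/
def qfC (a b c : ℤ) (x y : ℂ) : ℂ := (a : ℂ) * x ^ 2 + (b : ℂ) * x * y + (c : ℂ) * y ^ 2

/-- CM point of the positive definite form `[a,b,c]`. -/
def cmPoint (a b c : ℤ) : ℂ :=
  (-(b : ℂ) + Complex.I * ((Real.sqrt (((b ^ 2 - 4 * a * c).natAbs : ℝ))) : ℂ)) / (2 * (a : ℂ))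

/-- The form `[a,b,c] ∘ M`. -/
def qfComp (a b c : ℤ) (M : SL2Z) : ℤ × ℤ × ℤ :=
  (a * (M.1 0 0) ^ 2 + b * (M.1 0 0) * (M.1 1 0) + c * (M.1 1 0) ^ 2,
   2 * a * (M.1 0 0) * (M.1 0 1) + b * ((M.1 0 0) * (M.1 1 1) + (M.1 0 1) * (M.1 1 0)) +
     2 * c * (M.1 1 0) * (M.1 1 1),
   a * (M.1 0 1) ^ 2 + b * (M.1 0 1) * (M.1 1 1) + c * (M.1 1 1) ^ 2)

/-- `w_P`: order of the stabilizer of `P = [a,b,c]` in `PSL₂(ℤ)` (half the order of the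
stabilizer in `SL₂(ℤ)`, which contains `±1`). -/
def wP (a b c : ℤ) : ℕ := Nat.card {M : SL2Z // qfComp a b c M = (a, b, c)} / 2

/-- The meromorphic modular form `f_{k,P}` for `P = [a,b,c]`. -/
def fkP (k : ℕ) (a b c : ℤ) (z : ℂ) : ℂ :=
  (((((b ^ 2 - 4 * a * c).natAbs : ℝ)) ^ ((k : ℝ) - 1 / 2) : ℝ) : ℂ) /
      (2 * (π : ℂ) * (wP a b c : ℂ)) *
    ∑' M : SL2Z, (qfC a b c ((M.1 0 0 : ℂ) * z + (M.1 0 1 : ℂ))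
      ((M.1 1 0 : ℂ) * z + (M.1 1 1 : ℂ))) ^ (-(k : ℤ))

/-- The `n`-th period `r_n(f) = ∫₀^∞ f(iy) y^n dy`. -/
def periodN (n : ℕ) (f : ℂ → ℂ) : ℂ :=
  ∫ y in Set.Ioi (0 : ℝ), f ((y : ℂ) * Complex.I) * (y : ℂ) ^ n

/-- Epstein zeta function of `[a,b,c]` at an integer `k`. -/
def epstein (a b c : ℤ) (k : ℕ) : ℝ :=
  ∑' p : {p : ℤ × ℤ // p ≠ (0, 0)},
    ((a * p.1.1 ^ 2 + b * p.1.1 * p.1.2 + c * p.1.2 ^ 2 : ℤ) : ℝ) ^ (-(k : ℤ))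

/-- `sgn(M)` for `M = (a,b;c,d)`: `sgn(ac)` if `ac ≠ 0`, else `sgn(bd)`. -/
def sgnM (M : SL2Z) : ℤ :=
  if M.1 0 0 * M.1 1 0 ≠ 0 then Int.sign (M.1 0 0 * M.1 1 0) else Int.sign (M.1 0 1 * M.1 1 1)

/-- Upper incomplete Gamma function `Γ(s,x)` for a natural number `s`. -/
def GammaUpper (s : ℕ) (x : ℝ) : ℝ := ∫ t in Set.Ioi x, Real.exp (-t) * t ^ (s - 1)

/-- A cusp form of weight `2k` for `SL₂(ℤ)`, as a function on `ℂ` (holomorphic on `ℍ`,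
modular of weight `2k`, vanishing at the cusp `i∞`). -/
def IsCuspForm2k (k : ℕ) (f : ℂ → ℂ) : Prop :=
  (∀ τ : ℂ, 0 < τ.im → DifferentiableAt ℂ f τ) ∧
  (∀ (M : SL2Z) (τ : ℂ), 0 < τ.im → f (moeb M τ) = jfac M τ ^ (2 * k) * f τ) ∧
  Filter.Tendsto f (Filter.comap Complex.im Filter.atTop) (nhds 0)


/-- `l_{M,iy}(p) = iy (c p + d) - (a p + b)`. -/
def ll (M : SL2Z) (y : ℝ) (p : ℂ) : ℂ :=
  ((y : ℂ) * Complex.I) * ((M.1 1 0 : ℂ) * p + (M.1 1 1 : ℂ)) -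
    ((M.1 0 0 : ℂ) * p + (M.1 0 1 : ℂ))

/-- slope of `ll`. -/
def aa (M : SL2Z) (y : ℝ) : ℂ := ((y : ℂ) * Complex.I) * (M.1 1 0 : ℂ) - (M.1 0 0 : ℂ)

def A2 (M : SL2Z) : ℝ := (M.1 0 0 : ℝ) ^ 2 + (M.1 0 1 : ℝ) ^ 2
def C2 (M : SL2Z) : ℝ := (M.1 1 0 : ℝ) ^ 2 + (M.1 1 1 : ℝ) ^ 2
def DD (M : SL2Z) (y : ℝ) : ℝ := y ^ 2 * C2 M + A2 M

lemma ll_sub (M : SL2Z) (y : ℝ) (p q : ℂ) : ll M y p - ll M y q = aa M y * (p - q) := by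
  unfold ll aa; ring

lemma det_int (M : SL2Z) : M.1 0 0 * M.1 1 1 - M.1 0 1 * M.1 1 0 = 1 := by
  have := M.2
  rwa [Matrix.det_fin_two] at this

lemma det_real (M : SL2Z) :
    (M.1 0 0 : ℝ) * M.1 1 1 - M.1 0 1 * M.1 1 0 = 1 := by
  exact_mod_cast det_int M

lemma one_le_A2 (M : SL2Z) : 1 ≤ A2 M := by
  have h := det_int M
  have : (1 : ℤ) ≤ M.1 0 0 ^ 2 + M.1 0 1 ^ 2 := by
    by_contra hlt
    push Not at hlt
    have h1 : M.1 0 0 = 0 := by nlinarith [sq_nonneg (M.1 0 0), sq_nonneg (M.1 0 1)]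
    have h2 : M.1 0 1 = 0 := by nlinarith [sq_nonneg (M.1 0 0), sq_nonneg (M.1 0 1)]
    rw [h1, h2] at h
    simp at h
  unfold A2; exact_mod_cast this

lemma one_le_C2 (M : SL2Z) : 1 ≤ C2 M := by
  have h := det_int M
  have : (1 : ℤ) ≤ M.1 1 0 ^ 2 + M.1 1 1 ^ 2 := by
    by_contra hlt
    push Not at hlt
    have h1 : M.1 1 0 = 0 := by nlinarith [sq_nonneg (M.1 1 0), sq_nonneg (M.1 1 1)]
    have h2 : M.1 1 1 = 0 := by nlinarith [sq_nonneg (M.1 1 0), sq_nonneg (M.1 1 1)]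
    rw [h1, h2] at h
    simp at h
  unfold C2; exact_mod_cast this

lemma DD_ge (M : SL2Z) (y : ℝ) : y ^ 2 + 1 ≤ DD M y := by
  unfold DD
  nlinarith [one_le_A2 M, one_le_C2 M, sq_nonneg y]

lemma DD_pos (M : SL2Z) (y : ℝ) : 0 < DD M y := by
  nlinarith [DD_ge M y, sq_nonneg y]

lemma aa_norm_le (M : SL2Z) (y : ℝ) : ‖aa M y‖ ≤ Real.sqrt (DD M y) := by
  apply Real.le_sqrt_of_sq_le
  rw [← Complex.normSq_eq_norm_sq, Complex.normSq_apply]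
  unfold aa DD A2 C2
  simp
  nlinarith [sq_nonneg (y * (M.1 1 1 : ℝ)), sq_nonneg (M.1 0 1 : ℝ)]

/-- explicit norms -/
lemma ll_normSq (M : SL2Z) (y : ℝ) (p : ℂ) :
    ‖ll M y p‖ ^ 2 = y ^ 2 * (((M.1 1 0 : ℝ) * p.re + M.1 1 1) ^ 2 + ((M.1 1 0 : ℝ) * p.im) ^ 2)
      + (((M.1 0 0 : ℝ) * p.re + M.1 0 1) ^ 2 + ((M.1 0 0 : ℝ) * p.im) ^ 2) - 2 * y * p.im := by
  rw [← Complex.normSq_eq_norm_sq, Complex.normSq_apply]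
  unfold ll
  simp
  have h := det_real M
  linear_combination (-2 * y * p.im) * h

/-- quadratic form bound -/
lemma qf_bound (u v : ℝ) (hv : 0 < v) : ∃ K : ℝ, 1 ≤ K ∧ ∀ c d : ℝ,
    c ^ 2 + d ^ 2 ≤ K * ((c * u + d) ^ 2 + (c * v) ^ 2) := by
  refine ⟨2 + (1 + 2 * u ^ 2) / v ^ 2, ?_, ?_⟩
  · have : 0 ≤ (1 + 2 * u ^ 2) / v ^ 2 := by positivity
    linarith
  · intro c d
    have h1 : c ^ 2 = (c * v) ^ 2 / v ^ 2 := by field_simp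
    have h3 : c ^ 2 ≤ ((c * u + d) ^ 2 + (c * v) ^ 2) / v ^ 2 := by
      rw [h1]; gcongr; nlinarith [sq_nonneg (c * u + d)]
    have h2 : d ^ 2 ≤ 2 * (c * u + d) ^ 2 + 2 * u ^ 2 * c ^ 2 := by
      nlinarith [sq_nonneg (c * u + d + c * u)]
    have h4 : (2 + (1 + 2 * u ^ 2) / v ^ 2) * ((c * u + d) ^ 2 + (c * v) ^ 2)
      = 2 * ((c * u + d) ^ 2 + (c * v) ^ 2)
        + (1 + 2 * u ^ 2) * (((c * u + d) ^ 2 + (c * v) ^ 2) / v ^ 2) := by ring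
    rw [h4]
    nlinarith [sq_nonneg (c * v), mul_le_mul_of_nonneg_left h3 (by positivity : 0 ≤ 1 + 2 * u ^ 2)]

lemma jfac_ne (M : SL2Z) {τ : ℂ} (hτ : τ.im ≠ 0) : jfac M τ ≠ 0 := by
  intro h
  have hre := congrArg Complex.re h
  have him := congrArg Complex.im h
  unfold jfac at hre him
  simp at hre him
  have hc : (M.1 1 0) = 0 := by
    rcases him with h | h
    · exact h
    · exact absurd h hτ
  have h1 := det_int M
  rw [hc] at h1 hre
  simp at hre
  rw [hre] at h1
  simp at h1

lemma nfac_ne (M : SL2Z) {τ : ℂ} (hτ : τ.im ≠ 0) :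
    ((M.1 0 0 : ℂ) * τ + (M.1 0 1 : ℂ)) ≠ 0 := by
  intro h
  have hre := congrArg Complex.re h
  have him := congrArg Complex.im h
  simp at hre him
  have hc : (M.1 0 0) = 0 := by
    rcases him with h | h
    · exact h
    · exact absurd h hτ
  have h1 := det_int M
  rw [hc] at h1 hre
  simp at hre
  rw [hre] at h1
  simp at h1

lemma ll_eq (M : SL2Z) (y : ℝ) {τ : ℂ} (hτ : τ.im ≠ 0) :
    ll M y τ = jfac M τ * ((y : ℂ) * Complex.I - moeb M τ) := by
  have h := jfac_ne M hτ
  unfold ll moeb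
  unfold jfac at *
  field_simp

lemma moeb_im (M : SL2Z) {τ : ℂ} (hτ : τ.im ≠ 0) :
    (moeb M τ).im = τ.im / Complex.normSq (jfac M τ) := by
  unfold moeb
  have h := jfac_ne M hτ
  unfold jfac at *
  rw [Complex.div_im]
  have h2 := det_real M
  rw [← sub_div]
  congr 1
  simp
  linear_combination (τ.im) * h2

/-- if `M τ` is on the imaginary axis then `τ ∈ E1`. -/
lemma mem_E1_of (M : SL2Z) {τ : ℂ} (hτ : 0 < τ.im) (h : (moeb M τ).re = 0) : τ ∈ E1 := by
  unfold E1
  rw [Set.mem_iUnion]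
  refine ⟨M⁻¹, (moeb M τ).im, ?_, ?_⟩
  · rw [moeb_im M hτ.ne']
    exact div_pos hτ (Complex.normSq_pos.mpr (jfac_ne M hτ.ne'))
  · have hw : ((moeb M τ).im : ℂ) * Complex.I = moeb M τ := by
      apply Complex.ext <;> simp [h]
    simp only
    rw [hw]
    have hj := jfac_ne M hτ.ne'
    have hd : ((M.1 0 0 : ℂ) * M.1 1 1 - M.1 0 1 * M.1 1 0) = 1 := by
      exact_mod_cast det_int M
    unfold moeb
    simp only [Matrix.SpecialLinearGroup.SL2_inv_expl]
    unfold jfac at hj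
    simp
    have h1 : -((M.1 1 0 : ℂ) * (((M.1 0 0 : ℂ) * τ + M.1 0 1) / ((M.1 1 0 : ℂ) * τ + M.1 1 1)))
        + (M.1 0 0 : ℂ) = 1 / ((M.1 1 0 : ℂ) * τ + M.1 1 1) := by
      field_simp
      linear_combination hd
    have h2 : (M.1 1 1 : ℂ) * (((M.1 0 0 : ℂ) * τ + M.1 0 1) / ((M.1 1 0 : ℂ) * τ + M.1 1 1))
        + -(M.1 0 1 : ℂ) = τ / ((M.1 1 0 : ℂ) * τ + M.1 1 1) := by
      rw [eq_div_iff hj, add_mul, mul_assoc, div_mul_cancel₀ _ hj]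
      linear_combination τ * hd
    rw [h1, h2, div_div_div_cancel_right₀ hj, div_one]

lemma bad_finite (K : ℝ) : {M : SL2Z | A2 M * C2 M ≤ K}.Finite := by
  have hfin : (Set.Icc (-⌈K⌉) ⌈K⌉ ×ˢ Set.Icc (-⌈K⌉) ⌈K⌉ ×ˢ Set.Icc (-⌈K⌉) ⌈K⌉ ×ˢ
      Set.Icc (-⌈K⌉) ⌈K⌉ : Set (ℤ × ℤ × ℤ × ℤ)).Finite :=
    (Set.finite_Icc _ _).prod ((Set.finite_Icc _ _).prod ((Set.finite_Icc _ _).prod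
      (Set.finite_Icc _ _)))
  have key : ∀ z : ℤ, (z : ℝ) ^ 2 ≤ K → z ∈ Set.Icc (-⌈K⌉) ⌈K⌉ := by
    intro z hz
    have h1 : ((z ^ 2 : ℤ) : ℝ) ≤ (⌈K⌉ : ℝ) := by
      push_cast; exact hz.trans (Int.le_ceil K)
    have h2 : z ^ 2 ≤ ⌈K⌉ := by exact_mod_cast h1
    have h3 : |z| ≤ z ^ 2 := by
      rw [← sq_abs]
      rcases eq_or_ne z 0 with h | h
      · simp [h]
      · nlinarith [Int.one_le_abs h]
    exact abs_le.mp (h3.trans h2)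
  refine Set.Finite.of_finite_image (f := fun M : SL2Z => (M.1 0 0, M.1 0 1, M.1 1 0, M.1 1 1))
    (hfin.subset ?_) ?_
  · rintro _ ⟨M, hM, rfl⟩
    have hA := one_le_A2 M
    have hC := one_le_C2 M
    simp only [Set.mem_ofPred_eq] at hM
    have h1 : A2 M ≤ K := by nlinarith
    have h2 : C2 M ≤ K := by nlinarith
    unfold A2 at h1
    unfold C2 at h2
    refine ⟨key _ ?_, key _ ?_, key _ ?_, key _ ?_⟩ <;>
    nlinarith [sq_nonneg (M.1 0 0 : ℝ), sq_nonneg (M.1 0 1 : ℝ), sq_nonneg (M.1 1 0 : ℝ),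
      sq_nonneg (M.1 1 1 : ℝ)]
  · intro M _ N _ h
    simp only [Prod.mk.injEq] at h
    apply Subtype.ext
    ext i j
    fin_cases i <;> fin_cases j
    · exact h.1
    · exact h.2.1
    · exact h.2.2.1
    · exact h.2.2.2

/-- pointwise bound for a single matrix -/
lemma lower_single (M : SL2Z) {τ : ℂ} (hτ : 0 < τ.im) (hE : τ ∉ E1) :
    ∃ r : ℝ, 0 < r ∧ r ≤ 1 / 2 ∧ ∀ y : ℝ, 0 < y → r *
      (y ^ 2 * (((M.1 1 0 : ℝ) * τ.re + M.1 1 1) ^ 2 + ((M.1 1 0 : ℝ) * τ.im) ^ 2)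
      + (((M.1 0 0 : ℝ) * τ.re + M.1 0 1) ^ 2 + ((M.1 0 0 : ℝ) * τ.im) ^ 2))
      ≤ ‖ll M y τ‖ ^ 2 := by
  set J2 : ℝ := ((M.1 1 0 : ℝ) * τ.re + M.1 1 1) ^ 2 + ((M.1 1 0 : ℝ) * τ.im) ^ 2 with hJ2
  set N2 : ℝ := ((M.1 0 0 : ℝ) * τ.re + M.1 0 1) ^ 2 + ((M.1 0 0 : ℝ) * τ.im) ^ 2 with hN2
  set R : ℝ := ((M.1 0 0 : ℝ) * τ.re + M.1 0 1) * ((M.1 1 0 : ℝ) * τ.re + M.1 1 1) +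
    ((M.1 0 0 : ℝ) * τ.im) * ((M.1 1 0 : ℝ) * τ.im) with hR
  have hdet := det_real M
  have hid : N2 * J2 = τ.im ^ 2 + R ^ 2 := by
    have h1 : N2 * J2 = (τ.im * ((M.1 0 0 : ℝ) * M.1 1 1 - M.1 0 1 * M.1 1 0)) ^ 2 + R ^ 2 := by
      rw [hJ2, hN2, hR]; ring
    rw [h1, hdet, mul_one]
  have hJn : Complex.normSq (jfac M τ) = J2 := by
    rw [Complex.normSq_apply, hJ2]; unfold jfac; simp; ring
  have hJpos : 0 < J2 := hJn ▸ Complex.normSq_pos.mpr (jfac_ne M hτ.ne')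
  have hRne : R ≠ 0 := by
    intro hR0
    apply hE
    apply mem_E1_of M hτ
    have : (moeb M τ).re = R / Complex.normSq (jfac M τ) := by
      unfold moeb
      rw [Complex.div_re, ← add_div]
      unfold jfac
      congr 1
      simp [hR]
    rw [this, hR0, zero_div]
  have hR2 : 0 < R ^ 2 := by positivity
  have hNJ : 0 < N2 * J2 := by rw [hid]; positivity
  have hNpos : 0 < N2 := pos_of_mul_pos_left hNJ hJpos.le
  -- choose s = v / sqrt(N2 J2) < 1
  set s := τ.im / Real.sqrt (N2 * J2) with hs
  have hsq : 0 < Real.sqrt (N2 * J2) := Real.sqrt_pos.mpr hNJ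
  have hs1 : s < 1 := by
    rw [hs, div_lt_one hsq]
    apply Real.lt_sqrt_of_sq_lt
    rw [hid]; linarith
  have hs0 : 0 < s := div_pos hτ hsq
  refine ⟨min (1 / 2) (1 - s), lt_min (by norm_num) (by linarith), min_le_left _ _, ?_⟩
  intro y hy
  rw [ll_normSq]
  have hv : τ.im = s * Real.sqrt (N2 * J2) := by rw [hs]; field_simp
  have h2 : 2 * y * Real.sqrt (N2 * J2) ≤ y ^ 2 * J2 + N2 := by
    rw [Real.sqrt_mul hNpos.le]
    have e1 := Real.sq_sqrt hNpos.le
    have e2 := Real.sq_sqrt hJpos.le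
    nlinarith [sq_nonneg (y * Real.sqrt J2 - Real.sqrt N2)]
  have h3 : 2 * y * τ.im ≤ s * (y ^ 2 * J2 + N2) := by
    calc 2 * y * τ.im = s * (2 * y * Real.sqrt (N2 * J2)) := by rw [hv]; ring_nf
      _ ≤ _ := mul_le_mul_of_nonneg_left h2 hs0.le
  have h4 : min (1 / 2) (1 - s) * (y ^ 2 * J2 + N2) ≤ (1 - s) * (y ^ 2 * J2 + N2) :=
    mul_le_mul_of_nonneg_right (min_le_right _ _) (by positivity)
  rw [← hJ2, ← hN2]
  nlinarith

set_option maxHeartbeats 1000000 in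
/-- uniform lower bound -/
lemma lower_uniform {τ : ℂ} (hτ : 0 < τ.im) (hE : τ ∉ E1) :
    ∃ c : ℝ, 0 < c ∧ ∀ (M : SL2Z) (y : ℝ), 0 < y →
      c * Real.sqrt (DD M y) ≤ ‖ll M y τ‖ ∧
      c * Real.sqrt (DD M y) ≤ ‖ll M y (starRingEnd ℂ τ)‖ := by
  obtain ⟨K, hK1, hK⟩ := qf_bound τ.re τ.im hτ
  have hK0 : 0 < K := by linarith
  choose r hr0 hr1 hr using fun M : SL2Z => lower_single M hτ hE
  -- uniform r
  have hunif : ∃ r0 : ℝ, 0 < r0 ∧ r0 ≤ 1 / 2 ∧ ∀ (M : SL2Z) (y : ℝ), 0 < y → r0 *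
      (y ^ 2 * (((M.1 1 0 : ℝ) * τ.re + M.1 1 1) ^ 2 + ((M.1 1 0 : ℝ) * τ.im) ^ 2)
      + (((M.1 0 0 : ℝ) * τ.re + M.1 0 1) ^ 2 + ((M.1 0 0 : ℝ) * τ.im) ^ 2))
      ≤ ‖ll M y τ‖ ^ 2 := by
    have hfin := bad_finite (4 * K ^ 2 * τ.im ^ 2)
    obtain ⟨b, hb⟩ := (hfin.image (fun M => (r M)⁻¹)).bddAbove
    refine ⟨(max b 2)⁻¹, by positivity, ?_, ?_⟩
    · rw [one_div]; exact inv_anti₀ (by norm_num) (le_max_right _ _)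
    · intro M y hy
      by_cases hM : A2 M * C2 M ≤ 4 * K ^ 2 * τ.im ^ 2
      · refine le_trans ?_ (hr M y hy)
        have h1 : (r M)⁻¹ ≤ max b 2 := (hb ⟨M, hM, rfl⟩).trans (le_max_left _ _)
        have h2 : (max b 2)⁻¹ ≤ r M := inv_le_of_inv_le₀ (hr0 M) h1
        exact mul_le_mul_of_nonneg_right h2 (by positivity)
      · push Not at hM
        rw [ll_normSq]
        have hJ := hK (M.1 1 0 : ℝ) (M.1 1 1 : ℝ)
        have hN := hK (M.1 0 0 : ℝ) (M.1 0 1 : ℝ)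
        set J2 : ℝ := ((M.1 1 0 : ℝ) * τ.re + M.1 1 1) ^ 2 + ((M.1 1 0 : ℝ) * τ.im) ^ 2 with hJ2
        set N2 : ℝ := ((M.1 0 0 : ℝ) * τ.re + M.1 0 1) ^ 2 + ((M.1 0 0 : ℝ) * τ.im) ^ 2 with hN2
        have hJ0 : 0 ≤ J2 := by positivity
        have hN0 : 0 ≤ N2 := by positivity
        have hA := one_le_A2 M
        have hC := one_le_C2 M
        have h1 : A2 M * C2 M ≤ (K * N2) * (K * J2) :=
          mul_le_mul hN hJ (by linarith) (by positivity)
        have h2 : (2 * τ.im) ^ 2 ≤ N2 * J2 := by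
          have : K ^ 2 * (2 * τ.im) ^ 2 ≤ K ^ 2 * (N2 * J2) := by nlinarith
          exact le_of_mul_le_mul_left this (by positivity)
        have h3 : 2 * y * τ.im ≤ (y ^ 2 * J2 + N2) / 2 := by
          have : (2 * (2 * y * τ.im)) ^ 2 ≤ (y ^ 2 * J2 + N2) ^ 2 := by
            nlinarith [sq_nonneg (y ^ 2 * J2 - N2),
              mul_le_mul_of_nonneg_left h2 (sq_nonneg y)]
          have := abs_le_of_sq_le_sq this (by positivity)
          linarith [le_abs_self (2 * (2 * y * τ.im))]
        have h4 : (max b 2)⁻¹ ≤ 1 / 2 := by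
          rw [one_div]; exact inv_anti₀ (by norm_num) (le_max_right _ _)
        have h5 : 0 ≤ y ^ 2 * J2 + N2 := by positivity
        nlinarith [mul_le_mul_of_nonneg_right h4 h5]
  obtain ⟨r0, hr00, hr01, hr0'⟩ := hunif
  refine ⟨Real.sqrt (r0 / K), Real.sqrt_pos.mpr (by positivity), ?_⟩
  intro M y hy
  have hJ := hK (M.1 1 0 : ℝ) (M.1 1 1 : ℝ)
  have hN := hK (M.1 0 0 : ℝ) (M.1 0 1 : ℝ)
  have h := hr0' M y hy
  have hbar := ll_normSq M y (starRingEnd ℂ τ)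
  rw [Complex.conj_re, Complex.conj_im] at hbar
  rw [← Real.sqrt_mul (by positivity)]
  set J2 : ℝ := ((M.1 1 0 : ℝ) * τ.re + M.1 1 1) ^ 2 + ((M.1 1 0 : ℝ) * τ.im) ^ 2 with hJ2
  set N2 : ℝ := ((M.1 0 0 : ℝ) * τ.re + M.1 0 1) ^ 2 + ((M.1 0 0 : ℝ) * τ.im) ^ 2 with hN2
  have hJ0 : 0 ≤ J2 := by positivity
  have hN0 : 0 ≤ N2 := by positivity
  have hD : DD M y ≤ K * (y ^ 2 * J2 + N2) := by
    unfold DD C2 A2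
    nlinarith [mul_le_mul_of_nonneg_left hJ (sq_nonneg y)]
  have hD2 : r0 / K * DD M y ≤ r0 * (y ^ 2 * J2 + N2) := by
    calc r0 / K * DD M y ≤ r0 / K * (K * (y ^ 2 * J2 + N2)) :=
          mul_le_mul_of_nonneg_left hD (by positivity)
      _ = _ := by field_simp
  have h5 : 0 ≤ y ^ 2 * J2 + N2 := by positivity
  constructor
  · apply Real.sqrt_le_iff.mpr
    exact ⟨norm_nonneg _, hD2.trans h⟩
  · apply Real.sqrt_le_iff.mpr
    refine ⟨norm_nonneg _, hD2.trans ?_⟩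
    rw [hbar]
    have h6 : ((M.1 0 0 : ℝ) * -τ.im) ^ 2 = ((M.1 0 0 : ℝ) * τ.im) ^ 2 := by ring
    have h7 : ((M.1 1 0 : ℝ) * -τ.im) ^ 2 = ((M.1 1 0 : ℝ) * τ.im) ^ 2 := by ring
    rw [h6, h7, ← hJ2, ← hN2]
    nlinarith [mul_pos hy hτ]

lemma summable_inv_one_add_sq : Summable (fun x : ℤ => 1 / (1 + (x : ℝ) ^ 2)) := by
  have h : Summable (fun x : ℤ => 1 / (x : ℝ) ^ 2) :=
    Real.summable_one_div_int_pow.mpr (by norm_num)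
  have h0 : Summable (fun x : ℤ => if x = 0 then (1 : ℝ) else 0) :=
    summable_of_hasFiniteSupport ((Set.finite_singleton (0 : ℤ)).subset (by
      intro x hx; simp at hx; simp [hx]))
  refine Summable.of_nonneg_of_le (fun x => by positivity) (fun x => ?_) (h.add h0)
  by_cases hx : x = 0
  · simp [hx]
  · have : (x : ℝ) ≠ 0 := by exact_mod_cast hx
    simp only [hx, if_false, add_zero]
    apply one_div_le_one_div_of_le (by positivity)
    linarith

def ss (M : SL2Z) : ℤ := M.1 0 0 * M.1 1 0 + M.1 0 1 * M.1 1 1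
def a2 (M : SL2Z) : ℤ := M.1 0 0 ^ 2 + M.1 0 1 ^ 2

lemma a2_pos (M : SL2Z) : 0 < a2 M := by
  have := one_le_A2 M
  unfold A2 at this
  unfold a2
  have h : (1 : ℤ) ≤ M.1 0 0 ^ 2 + M.1 0 1 ^ 2 := by exact_mod_cast this
  linarith

lemma A2C2 (M : SL2Z) : A2 M * C2 M = (ss M : ℝ) ^ 2 + 1 := by
  have h := det_real M
  unfold A2 C2 ss
  push_cast
  have : (1 : ℝ) = ((M.1 0 0 : ℝ) * M.1 1 1 - M.1 0 1 * M.1 1 0) ^ 2 := by rw [h]; norm_num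
  rw [this]; ring

def phi3 (M : SL2Z) : ℤ × ℤ × ℤ := (M.1 0 0, M.1 0 1, ss M / a2 M)

lemma phi3_inj : Function.Injective phi3 := by
  intro M N h
  unfold phi3 at h
  simp only [Prod.mk.injEq] at h
  obtain ⟨h1, h2, h3⟩ := h
  have dM := det_int M
  have dN := det_int N
  set t : ℤ := M.1 1 1 * (M.1 1 0 - N.1 1 0) - M.1 1 0 * (M.1 1 1 - N.1 1 1) with ht
  have e1 : M.1 1 0 - N.1 1 0 = t * M.1 0 0 := by
    rw [ht]
    rw [← h1, ← h2] at dN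
    linear_combination (N.1 1 0) * dM - (M.1 1 0) * dN
  have e2 : M.1 1 1 - N.1 1 1 = t * M.1 0 1 := by
    rw [ht]
    rw [← h1, ← h2] at dN
    linear_combination (N.1 1 1) * dM - (M.1 1 1) * dN
  have ha : a2 N = a2 M := by unfold a2; rw [h1, h2]
  have hs : ss M = ss N + t * a2 M := by
    unfold ss a2
    rw [← h1, ← h2]
    linear_combination (M.1 0 0) * e1 + (M.1 0 1) * e2
  have hp := a2_pos M
  rw [ha, hs, Int.add_mul_ediv_right _ _ hp.ne'] at h3
  have ht0 : t = 0 := by linarith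
  rw [ht0] at e1 e2
  apply Subtype.ext
  ext i j
  fin_cases i <;> fin_cases j
  · exact h1
  · exact h2
  · show M.1 1 0 = N.1 1 0
    linarith
  · show M.1 1 1 = N.1 1 1
    linarith

lemma bound3 (M : SL2Z) (hM : A2 M ≤ C2 M) : 1 / (A2 M * C2 M) ≤
    20 * (1 / (1 + ((phi3 M).1 : ℝ) ^ 2) * (1 / (1 + ((phi3 M).2.1 : ℝ) ^ 2) *
      (1 / (1 + ((phi3 M).2.2 : ℝ) ^ 2)))) := by
  have hA := one_le_A2 M
  have hC := one_le_C2 M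
  have hAC := A2C2 M
  have hp := a2_pos M
  have hA2 : (a2 M : ℝ) = A2 M := by unfold a2 A2; push_cast; ring
  have hq1 := Int.mul_ediv_add_emod (ss M) (a2 M)
  have hq2 := Int.emod_nonneg (ss M) hp.ne'
  have hq3 := Int.emod_lt_of_pos (ss M) hp
  unfold phi3
  simp only
  set q := ss M / a2 M with hq
  set r := ss M % a2 M with hr
  have g1 : (ss M : ℝ) = A2 M * q + r := by rw [← hA2]; exact_mod_cast hq1.symm
  have g2 : (0 : ℝ) ≤ r := by exact_mod_cast hq2
  have g3 : (r : ℝ) < A2 M := by rw [← hA2]; exact_mod_cast hq3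
  have hbig : A2 M ^ 2 ≤ A2 M * C2 M := by nlinarith
  have hq5 : A2 M ^ 2 * (1 + (q : ℝ) ^ 2) ≤ 5 * (A2 M * C2 M) := by
    rcases le_or_gt 0 q with h | h
    · have hq0 : (0 : ℝ) ≤ q := by exact_mod_cast h
      have h1 : (A2 M * q) ^ 2 ≤ (ss M : ℝ) ^ 2 := by
        rw [g1]; apply pow_le_pow_left₀ (by positivity); linarith
      nlinarith
    · have hq0 : (q : ℝ) ≤ -1 := by exact_mod_cast (by omega : q ≤ -1)
      have h1 : (A2 M * (-(q + 1))) ^ 2 ≤ (ss M : ℝ) ^ 2 := by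
        rw [← neg_sq (ss M : ℝ)]
        apply pow_le_pow_left₀
        · apply mul_nonneg (by linarith); linarith
        · rw [g1]; nlinarith
      have h2 : 1 + (q : ℝ) ^ 2 ≤ 2 * (q + 1) ^ 2 + 3 := by nlinarith [sq_nonneg ((q : ℝ) + 2)]
      have h3 := mul_le_mul_of_nonneg_left h2 (sq_nonneg (A2 M))
      nlinarith
  have ha1 : 1 + (M.1 0 0 : ℝ) ^ 2 ≤ 2 * A2 M := by
    have : A2 M = (M.1 0 0 : ℝ) ^ 2 + (M.1 0 1 : ℝ) ^ 2 := rfl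
    nlinarith [sq_nonneg (M.1 0 1 : ℝ)]
  have hb1 : 1 + (M.1 0 1 : ℝ) ^ 2 ≤ 2 * A2 M := by
    have : A2 M = (M.1 0 0 : ℝ) ^ 2 + (M.1 0 1 : ℝ) ^ 2 := rfl
    nlinarith [sq_nonneg (M.1 0 0 : ℝ)]
  have hab : (1 + (M.1 0 0 : ℝ) ^ 2) * (1 + (M.1 0 1 : ℝ) ^ 2) ≤ 4 * A2 M ^ 2 := by
    calc _ ≤ (2 * A2 M) * (2 * A2 M) := mul_le_mul ha1 hb1 (by positivity) (by linarith)
      _ = _ := by ring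
  have hfin : (1 + (M.1 0 0 : ℝ) ^ 2) * ((1 + (M.1 0 1 : ℝ) ^ 2) * (1 + (q : ℝ) ^ 2)) ≤
      20 * (A2 M * C2 M) := by
    calc _ = ((1 + (M.1 0 0 : ℝ) ^ 2) * (1 + (M.1 0 1 : ℝ) ^ 2)) * (1 + (q : ℝ) ^ 2) := by ring
      _ ≤ (4 * A2 M ^ 2) * (1 + (q : ℝ) ^ 2) := mul_le_mul_of_nonneg_right hab (by positivity)
      _ ≤ _ := by nlinarith
  have hpos : 0 < A2 M * C2 M := by positivity
  rw [one_div_mul_one_div, one_div_mul_one_div, mul_one_div, div_le_div_iff₀ hpos (by positivity)]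
  linarith

lemma S_mul_00 (M : SL2Z) : (ModularGroup.S * M).1 0 0 = -M.1 1 0 := by
  show (ModularGroup.S.1 * M.1) 0 0 = _
  rw [Matrix.mul_apply, Fin.sum_univ_two]
  simp [ModularGroup.S]

lemma S_mul_01 (M : SL2Z) : (ModularGroup.S * M).1 0 1 = -M.1 1 1 := by
  show (ModularGroup.S.1 * M.1) 0 1 = _
  rw [Matrix.mul_apply, Fin.sum_univ_two]
  simp [ModularGroup.S]

lemma S_mul_10 (M : SL2Z) : (ModularGroup.S * M).1 1 0 = M.1 0 0 := by
  show (ModularGroup.S.1 * M.1) 1 0 = _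
  rw [Matrix.mul_apply, Fin.sum_univ_two]
  simp [ModularGroup.S]

lemma S_mul_11 (M : SL2Z) : (ModularGroup.S * M).1 1 1 = M.1 0 1 := by
  show (ModularGroup.S.1 * M.1) 1 1 = _
  rw [Matrix.mul_apply, Fin.sum_univ_two]
  simp [ModularGroup.S]

lemma summable_A2C2 : Summable (fun M : SL2Z => 1 / (A2 M * C2 M)) := by
  have hh := summable_inv_one_add_sq
  have h3 : Summable (fun x : ℤ × ℤ × ℤ => 20 * (1 / (1 + (x.1 : ℝ) ^ 2) *
      (1 / (1 + (x.2.1 : ℝ) ^ 2) * (1 / (1 + (x.2.2 : ℝ) ^ 2))))) := by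
    apply Summable.mul_left
    have h2 := hh.mul_of_nonneg hh (fun x => by positivity) (fun x => by positivity)
    exact hh.mul_of_nonneg h2 (fun x => by positivity) (fun x => by positivity)
  have h4 := h3.comp_injective phi3_inj
  set g : SL2Z → ℝ := fun M => if A2 M ≤ C2 M then 1 / (A2 M * C2 M) else 0 with hg
  have hnn : ∀ M : SL2Z, 0 ≤ 1 / (A2 M * C2 M) := fun M => by
    have := one_le_A2 M
    have := one_le_C2 M
    positivity
  have hg0 : ∀ M, 0 ≤ g M := by
    intro M; rw [hg]; simp only; split_ifs
    · exact hnn M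
    · exact le_rfl
  have hgs : Summable g := by
    refine Summable.of_nonneg_of_le hg0 (fun M => ?_) h4
    rw [hg]; simp only; split_ifs with h
    · exact bound3 M h
    · simp only [Function.comp]; positivity
  have hgs2 : Summable (fun M => g (ModularGroup.S * M)) :=
    hgs.comp_injective (Equiv.mulLeft ModularGroup.S).injective
  refine Summable.of_nonneg_of_le hnn (fun M => ?_) (hgs.add hgs2)
  have eA : A2 (ModularGroup.S * M) = C2 M := by
    unfold A2 C2
    simp [S_mul_00, S_mul_01, S_mul_10, S_mul_11]
  have eC : C2 (ModularGroup.S * M) = A2 M := by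
    unfold A2 C2
    simp [S_mul_00, S_mul_01, S_mul_10, S_mul_11]
  rcases le_total (A2 M) (C2 M) with h | h
  · have : g M = 1 / (A2 M * C2 M) := by rw [hg]; simp only [h, if_true]
    linarith [hg0 (ModularGroup.S * M)]
  · have : g (ModularGroup.S * M) = 1 / (A2 M * C2 M) := by
      rw [hg]; simp only [eA, eC, h, if_true]; rw [mul_comm]
    linarith [hg0 M]

instance instMSL : MeasurableSpace SL2Z := ⊤
instance instDSL : DiscreteMeasurableSpace SL2Z := ⟨fun _ => trivial⟩
instance instCSL : Countable SL2Z := phi3_inj.countable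

def muX : Measure (SL2Z × ℝ) :=
  (Measure.count : Measure SL2Z).prod (volume.restrict (Set.Ioi (0 : ℝ)))

lemma ae_pos : ∀ᵐ x ∂muX, 0 < x.2 := by
  have h : ∀ᵐ y ∂(volume.restrict (Set.Ioi (0 : ℝ))), 0 < y :=
    ae_restrict_mem measurableSet_Ioi
  exact (Measure.quasiMeasurePreserving_snd (μ := (Measure.count : Measure SL2Z))
    (ν := volume.restrict (Set.Ioi (0 : ℝ)))).ae h

lemma aesm_of {E : Type*} [NormedAddCommGroup E] [MeasurableSpace E] [BorelSpace E]
    [SecondCountableTopology E] {f : SL2Z × ℝ → E}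
    (hf : ∀ M, Measurable fun y => f (M, y)) : AEStronglyMeasurable f muX :=
  (measurable_from_prod_countable_right hf).aestronglyMeasurable

lemma single_int (M : SL2Z) :
    IntegrableOn (fun y : ℝ => y / DD M y ^ 2) (Set.Ioi 0) ∧
    ∫ y in Set.Ioi (0 : ℝ), y / DD M y ^ 2 = 1 / 2 * (1 / (A2 M * C2 M)) := by
  have hA := one_le_A2 M
  have hC := one_le_C2 M
  have hd : ∀ y : ℝ, HasDerivAt (fun y : ℝ => -1 / (2 * C2 M * DD M y)) (y / DD M y ^ 2) y := by
    intro y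
    have hD := DD_pos M y
    have h1 : HasDerivAt (fun y : ℝ => DD M y) (2 * y * C2 M) y := by
      unfold DD
      have := ((hasDerivAt_pow 2 y).mul_const (C2 M)).add_const (A2 M)
      simpa using this
    have h2 := ((h1.const_mul (2 * C2 M)).fun_inv (by positivity)).const_mul (-1)
    refine (h2.congr_deriv ?_).congr_of_eventuallyEq ?_
    · field_simp
    · exact Filter.Eventually.of_forall fun y => by simp [div_eq_mul_inv]
  have ht : Filter.Tendsto (fun y : ℝ => -1 / (2 * C2 M * DD M y)) Filter.atTop (nhds 0) := by
    apply Filter.Tendsto.const_div_atTop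
    apply Filter.Tendsto.const_mul_atTop (by positivity)
    apply Filter.tendsto_atTop_mono (f := fun y : ℝ => y)
    · intro y; nlinarith [DD_ge M y, sq_nonneg (y - 1 / 2)]
    · exact Filter.tendsto_id
  have hnn : ∀ y ∈ Set.Ioi (0 : ℝ), 0 ≤ y / DD M y ^ 2 := by
    intro y hy
    have : (0 : ℝ) < y := hy
    positivity
  refine ⟨integrableOn_Ioi_deriv_of_nonneg (hd 0).continuousAt.continuousWithinAt
    (fun y _ => hd y) hnn ht, ?_⟩
  rw [integral_Ioi_of_hasDerivAt_of_nonneg' (fun y _ => hd y) hnn ht]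
  unfold DD
  field_simp
  simp

lemma integrable_base : Integrable (fun x : SL2Z × ℝ => x.2 / DD x.1 x.2 ^ 2) muX := by
  unfold muX
  rw [integrable_prod_iff]
  · refine ⟨Filter.Eventually.of_forall fun M => (single_int M).1, ?_⟩
    rw [integrable_count_iff]
    have : ∀ M : SL2Z, ‖∫ y in Set.Ioi (0 : ℝ), ‖y / DD M y ^ 2‖‖ =
        1 / 2 * (1 / (A2 M * C2 M)) := by
      intro M
      have hA := one_le_A2 M
      have hC := one_le_C2 M
      rw [← (single_int M).2, Real.norm_of_nonneg (integral_nonneg fun y => norm_nonneg _)]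
      apply setIntegral_congr_fun measurableSet_Ioi
      intro y hy
      have : (0 : ℝ) < y := hy
      simp only
      rw [Real.norm_of_nonneg]
      positivity
    simp only [this]
    exact summable_A2C2.mul_left _
  · apply aesm_of
    intro M
    unfold DD
    fun_prop

lemma integrable_wt {k n : ℕ} (hk : 2 ≤ k) (hn0 : 0 < n) (hn1 : n < 2 * k - 2) :
    Integrable (fun x : SL2Z × ℝ => x.2 ^ n * (Real.sqrt (DD x.1 x.2) ^ (2 * k))⁻¹) muX := by
  refine integrable_base.mono' ?_ ?_
  · apply aesm_of
    intro M
    unfold DD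
    fun_prop
  · filter_upwards [ae_pos] with x hx
    obtain ⟨M, y⟩ := x
    simp only at hx ⊢
    have hD := DD_pos M y
    have hD1 := DD_ge M y
    rw [Real.norm_of_nonneg (by positivity), pow_mul, Real.sq_sqrt hD.le]
    rw [← div_eq_mul_inv, div_le_div_iff₀ (by positivity) (by positivity)]
    obtain ⟨n', rfl⟩ : ∃ n', n = n' + 1 := ⟨n - 1, by omega⟩
    obtain ⟨k', rfl⟩ : ∃ k', k = k' + 2 := ⟨k - 2, by omega⟩
    have h1 : y ^ n' ≤ (y ^ 2 + 1) ^ k' := by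
      have hs : 1 ≤ Real.sqrt (y ^ 2 + 1) := Real.one_le_sqrt.mpr (by nlinarith)
      calc y ^ n' ≤ Real.sqrt (y ^ 2 + 1) ^ n' := by
            apply pow_le_pow_left₀ hx.le
            apply Real.le_sqrt_of_sq_le; linarith
        _ ≤ Real.sqrt (y ^ 2 + 1) ^ (2 * k') := pow_le_pow_right₀ hs (by omega)
        _ = _ := by rw [pow_mul, Real.sq_sqrt (by positivity)]
    have h2 : y ^ n' ≤ DD M y ^ k' := h1.trans (pow_le_pow_left₀ (by positivity) hD1 _)
    calc y ^ (n' + 1) * DD M y ^ 2 = (y * DD M y ^ 2) * y ^ n' := by ring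
      _ ≤ (y * DD M y ^ 2) * DD M y ^ k' := mul_le_mul_of_nonneg_left h2 (by positivity)
      _ = _ := by ring

def Good (c : ℝ) (p : ℂ) : Prop :=
  ∀ (M : SL2Z) (y : ℝ), 0 < y → c * Real.sqrt (DD M y) ≤ ‖ll M y p‖

lemma good_ball {c : ℝ} {p q : ℂ} (hp : Good c p) (hq : dist q p < c / 2) :
    Good (c / 2) q := by
  intro M y hy
  have h1 := hp M y hy
  have h2 := aa_norm_le M y
  have h3 := ll_sub M y p q
  have h4 : ‖ll M y p‖ ≤ ‖ll M y q‖ + ‖aa M y‖ * ‖p - q‖ := by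
    rw [← norm_mul, ← h3]
    have := norm_add_le (ll M y q) (ll M y p - ll M y q)
    simpa using this
  rw [dist_comm, dist_eq_norm] at hq
  have h5 : ‖aa M y‖ * ‖p - q‖ ≤ Real.sqrt (DD M y) * (c / 2) :=
    mul_le_mul h2 hq.le (norm_nonneg _) (Real.sqrt_nonneg _)
  linarith

lemma exists_good {τ : ℂ} (hτ : 0 < τ.im) (hE : τ ∉ E1) :
    ∃ c ε : ℝ, 0 < c ∧ 0 < ε ∧ ε ≤ τ.im ∧ (∀ p ∈ Metric.ball τ ε, Good c p) ∧
      (∀ p ∈ Metric.ball (starRingEnd ℂ τ) ε, Good c p) := by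
  obtain ⟨c, hc, h⟩ := lower_uniform hτ hE
  refine ⟨c / 2, min (c / 2) τ.im, by positivity, lt_min (by positivity) hτ, min_le_right _ _,
    ?_, ?_⟩
  · intro p hp
    exact good_ball (fun M y hy => (h M y hy).1) (lt_of_lt_of_le hp (min_le_left _ _))
  · intro p hp
    exact good_ball (fun M y hy => (h M y hy).2) (lt_of_lt_of_le hp (min_le_left _ _))

lemma ll_ne {c : ℝ} (hc : 0 < c) {p : ℂ} (hp : Good c p) (M : SL2Z) {y : ℝ} (hy : 0 < y) :
    ll M y p ≠ 0 := by
  have := hp M y hy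
  have h2 := Real.sqrt_pos.mpr (DD_pos M y)
  rw [← norm_pos_iff]
  exact lt_of_lt_of_le (by positivity) this

def Phi (n i j : ℕ) (p q : ℂ) : ℂ :=
  ∫ x : SL2Z × ℝ, (x.2 : ℂ) ^ n * (ll x.1 x.2 p ^ i * ll x.1 x.2 q ^ j)⁻¹ ∂muX

lemma phi_meas (n i j : ℕ) (p q : ℂ) : AEStronglyMeasurable (fun x : SL2Z × ℝ =>
    (x.2 : ℂ) ^ n * (ll x.1 x.2 p ^ i * ll x.1 x.2 q ^ j)⁻¹) muX := by
  apply aesm_of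
  intro M
  unfold ll
  fun_prop

lemma inv_bound {c : ℝ} (hc : 0 < c) {p q : ℂ} (hp : Good c p) (hq : Good c q) (i j : ℕ)
    (M : SL2Z) {y : ℝ} (hy : 0 < y) :
    ‖(ll M y p ^ i * ll M y q ^ j)⁻¹‖ ≤
      (c ^ (i + j))⁻¹ * (Real.sqrt (DD M y) ^ (i + j))⁻¹ := by
  have h2 := Real.sqrt_pos.mpr (DD_pos M y)
  rw [norm_inv, norm_mul, norm_pow, norm_pow, ← mul_inv, ← mul_pow, pow_add]
  apply inv_anti₀ (by positivity)
  exact mul_le_mul (pow_le_pow_left₀ (by positivity) (hp M y hy) _)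
    (pow_le_pow_left₀ (by positivity) (hq M y hy) _) (by positivity) (by positivity)

lemma phi_integrable {k n i j : ℕ} (hk : 2 ≤ k) (hn0 : 0 < n) (hn1 : n < 2 * k - 2)
    (hij : i + j = 2 * k) {c : ℝ} (hc : 0 < c) {p q : ℂ} (hp : Good c p) (hq : Good c q) :
    Integrable (fun x : SL2Z × ℝ =>
      (x.2 : ℂ) ^ n * (ll x.1 x.2 p ^ i * ll x.1 x.2 q ^ j)⁻¹) muX := by
  refine ((integrable_wt hk hn0 hn1).const_mul ((c ^ (2 * k))⁻¹)).mono' (phi_meas n i j p q) ?_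
  filter_upwards [ae_pos] with x hx
  obtain ⟨M, y⟩ := x
  simp only at hx ⊢
  have h := inv_bound hc hp hq i j M hx
  rw [hij] at h
  rw [norm_mul, norm_pow, Complex.norm_real, Real.norm_of_nonneg hx.le]
  calc y ^ n * _ ≤ y ^ n * ((c ^ (2 * k))⁻¹ * (Real.sqrt (DD M y) ^ (2 * k))⁻¹) :=
        mul_le_mul_of_nonneg_left h (by positivity)
    _ = _ := by ring

lemma phi_hasDerivAt {k n i j : ℕ} (hk : 2 ≤ k) (hn0 : 0 < n) (hn1 : n < 2 * k - 2)
    (hij : i + j = 2 * k) {c : ℝ} (hc : 0 < c) {p q0 q1 : ℂ} {r : ℝ} (hp : Good c p)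
    (hq : ∀ q ∈ Metric.ball q0 r, Good c q) (hq1 : q1 ∈ Metric.ball q0 r) :
    Integrable (fun x : SL2Z × ℝ => (x.2 : ℂ) ^ n * (-(j : ℂ) * aa x.1 x.2 *
      (ll x.1 x.2 p ^ i * ll x.1 x.2 q1 ^ (j + 1))⁻¹)) muX ∧
    HasDerivAt (fun q => Phi n i j p q)
      (∫ x : SL2Z × ℝ, (x.2 : ℂ) ^ n * (-(j : ℂ) * aa x.1 x.2 *
        (ll x.1 x.2 p ^ i * ll x.1 x.2 q1 ^ (j + 1))⁻¹) ∂muX) q1 := by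
  have hb := (integrable_wt hk hn0 hn1).const_mul (j * (c ^ (2 * k + 1))⁻¹)
  refine hasDerivAt_integral_of_dominated_loc_of_deriv_le
    (F := fun q (x : SL2Z × ℝ) => (x.2 : ℂ) ^ n * (ll x.1 x.2 p ^ i * ll x.1 x.2 q ^ j)⁻¹)
    (F' := fun q (x : SL2Z × ℝ) => (x.2 : ℂ) ^ n * (-(j : ℂ) * aa x.1 x.2 *
        (ll x.1 x.2 p ^ i * ll x.1 x.2 q ^ (j + 1))⁻¹))
    (Metric.isOpen_ball.mem_nhds hq1) (Filter.Eventually.of_forall fun q => phi_meas n i j p q)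
    (phi_integrable hk hn0 hn1 hij hc hp (hq q1 hq1)) ?_ ?_ hb ?_
  · apply aesm_of
    intro M
    unfold ll aa
    fun_prop
  · filter_upwards [ae_pos] with x hx q hqb
    obtain ⟨M, y⟩ := x
    simp only at hx ⊢
    have h := inv_bound hc hp (hq q hqb) i (j + 1) M hx
    rw [← add_assoc, hij] at h
    have ha := aa_norm_le M y
    have h2 := Real.sqrt_pos.mpr (DD_pos M y)
    rw [norm_mul, norm_mul, norm_mul, norm_pow, Complex.norm_real, Real.norm_of_nonneg hx.le,
      norm_neg, Complex.norm_natCast]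
    calc y ^ n * (j * ‖aa M y‖ * _) ≤ y ^ n * (j * Real.sqrt (DD M y) *
          ((c ^ (2 * k + 1))⁻¹ * (Real.sqrt (DD M y) ^ (2 * k + 1))⁻¹)) := by
            gcongr
      _ = _ := by
        rw [pow_succ (Real.sqrt (DD M y)) (2 * k)]
        field_simp
  · filter_upwards [ae_pos] with x hx q hqb
    obtain ⟨M, y⟩ := x
    simp only at hx ⊢
    have hne := ll_ne hc (hq q hqb) M hx
    have hnp := ll_ne hc hp M hx
    have h1 : HasDerivAt (fun q => ll M y q) (aa M y) q := by
      have e : (fun q => ll M y q) = fun q => aa M y * q + ll M y 0 := by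
        funext q
        unfold ll aa; ring
      rw [e]
      simpa using ((hasDerivAt_id q).const_mul (aa M y)).add_const (ll M y 0)
    have h2 := (((h1.pow j).const_mul (ll M y p ^ i)).fun_inv
      (mul_ne_zero (pow_ne_zero _ hnp) (pow_ne_zero _ hne))).const_mul ((y : ℂ) ^ n)
    refine h2.congr_deriv ?_
    congr 1
    rcases j with _ | j
    · simp
    · simp only [Nat.add_sub_cancel, Pi.pow_apply]
      field_simp
      ring

lemma integral_muX {f : SL2Z × ℝ → ℂ} (hf : Integrable f muX) :
    ∫ x, f x ∂muX = ∫ y in Set.Ioi (0 : ℝ), ∑' M : SL2Z, f (M, y) := by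
  unfold muX at *
  rw [integral_prod_symm f hf]
  apply integral_congr_ae
  filter_upwards [hf.prod_left_ae] with y hy
  rw [integral_countable hy]
  congr 1
  funext M
  simp [Measure.real]

lemma integral_muX' {f : SL2Z × ℝ → ℂ} (hf : Integrable f muX) :
    ∫ x, f x ∂muX = ∑' M : SL2Z, ∫ y in Set.Ioi (0 : ℝ), f (M, y) := by
  unfold muX at *
  rw [integral_prod f hf, integral_countable hf.integral_prod_left]
  congr 1
  funext M
  simp [Measure.real]

lemma term_eq {k : ℕ} (hk : 2 ≤ k) {τ : ℂ} (hτ : 0 < τ.im) (M : SL2Z) (y : ℝ) :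
    jfac M τ ^ (2 * k - 2) * ((moeb M τ).im : ℂ) ^ (2 * k - 1) *
    ((y : ℂ) * Complex.I - moeb M τ)⁻¹ *
      ((y : ℂ) * Complex.I - starRingEnd ℂ (moeb M τ)) ^ (1 - 2 * (k : ℤ)) =
    (τ.im : ℂ) ^ (2 * k - 1) * (ll M y τ ^ 1 * ll M y (starRingEnd ℂ τ) ^ (2 * k - 1))⁻¹ := by
  have hj := jfac_ne M hτ.ne'
  have hcim : (starRingEnd ℂ τ).im ≠ 0 := by simpa using hτ.ne'
  have hj2 := jfac_ne M hcim
  have hm : moeb M (starRingEnd ℂ τ) = starRingEnd ℂ (moeb M τ) := by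
    unfold moeb; simp
  have hjc : jfac M (starRingEnd ℂ τ) = starRingEnd ℂ (jfac M τ) := by
    unfold jfac; simp
  rw [ll_eq M y hτ.ne', ll_eq M y hcim, hm, moeb_im M hτ.ne']
  have hns : ((Complex.normSq (jfac M τ) : ℝ) : ℂ) = jfac M τ * jfac M (starRingEnd ℂ τ) := by
    rw [hjc, Complex.mul_conj]
  push_cast
  rw [hns]
  obtain ⟨m, hm⟩ : ∃ m, 2 * k = m + 2 := ⟨2 * k - 2, by omega⟩
  have e1 : 2 * k - 2 = m := by omega
  have e2 : 2 * k - 1 = m + 1 := by omega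
  have e3 : (1 - 2 * (k : ℤ)) = -((m + 1 : ℕ) : ℤ) := by push_cast; omega
  rw [e1, e2, e3, zpow_neg, zpow_natCast]
  simp only [mul_pow, div_pow, mul_inv, pow_one]
  field_simp
  ring

lemma Hlhmf_eq {k n : ℕ} (hk : 2 ≤ k) (hn0 : 0 < n) (hn1 : n < 2 * k - 2) {c : ℝ} (hc : 0 < c)
    {τ : ℂ} (hτ : 0 < τ.im) (h1 : Good c τ) (h2 : Good c (starRingEnd ℂ τ)) :
    Hlhmf k n τ = (4 * (π : ℂ) * Complex.I)⁻¹ * ((τ - starRingEnd ℂ τ) ^ (2 * k - 1) *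
      Phi n 1 (2 * k - 1) τ (starRingEnd ℂ τ)) := by
  have hintg := phi_integrable (i := 1) (j := 2 * k - 1) hk hn0 hn1 (by omega) hc h1 h2
  unfold Hlhmf Phi
  rw [integral_muX hintg]
  have hstep : (∫ y in Set.Ioi (0 : ℝ), Hpet k ((y : ℂ) * Complex.I) τ * (y : ℂ) ^ n) =
      (τ.im : ℂ) ^ (2 * k - 1) * ∫ y in Set.Ioi (0 : ℝ), ∑' M : SL2Z, (y : ℂ) ^ n *
        (ll M y τ ^ 1 * ll M y (starRingEnd ℂ τ) ^ (2 * k - 1))⁻¹ := by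
    rw [← integral_const_mul]
    congr 1
    funext y
    unfold Hpet
    simp only [term_eq hk hτ]
    rw [tsum_mul_left, tsum_mul_left]
    ring
  rw [hstep]
  have hv : τ - starRingEnd ℂ τ = 2 * Complex.I * (τ.im : ℂ) := by
    rw [Complex.sub_conj]; push_cast; ring
  rw [hv]
  obtain ⟨m, hm⟩ : ∃ m, 2 * k = m + 2 := ⟨2 * k - 2, by omega⟩
  have e1 : 2 * k - 2 = m := by omega
  have e2 : 2 * k - 1 = m + 1 := by omega
  rw [e1, e2]
  have hpi : (π : ℂ) ≠ 0 := by exact_mod_cast Real.pi_ne_zero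
  simp only [mul_pow, pow_succ]
  field_simp
  ring

lemma key_alg {L : ℂ} (m : ℕ) (τ τ0 σ l0 ls lt : ℂ) (h0 : l0 ≠ 0) (hs : ls ≠ 0) (ht : lt ≠ 0)
    (e0 : lt - l0 = L * (τ - τ0)) (es : lt - ls = L * (τ - σ)) :
    (τ - σ) ^ m * (lt ^ 1 * ls ^ m)⁻¹ = (τ - τ0) ^ m * (l0 ^ m * lt ^ 1)⁻¹ +
      ∑ i ∈ Finset.range m, (τ - τ0) ^ (m - 1 - i) * ((τ - σ) ^ i * ((τ0 - σ) *
        (l0 ^ (m - i) * ls ^ (1 + i))⁻¹)) := by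
  have hab : (τ - σ) * l0 - (τ - τ0) * ls = (τ0 - σ) * lt := by
    linear_combination (-(τ - σ)) * e0 + (τ - τ0) * es
  have hgs := (Commute.all ((τ - σ) * l0) ((τ - τ0) * ls)).mul_geom_sum₂ m
  rw [hab] at hgs
  have hsum : (∑ i ∈ Finset.range m, (τ - τ0) ^ (m - 1 - i) * ((τ - σ) ^ i * ((τ0 - σ) *
        (l0 ^ (m - i) * ls ^ (1 + i))⁻¹))) = (τ0 - σ) * (∑ i ∈ Finset.range m,
          ((τ - σ) * l0) ^ i * ((τ - τ0) * ls) ^ (m - 1 - i)) * (l0 ^ m * ls ^ m)⁻¹ := by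
    rw [Finset.mul_sum, Finset.sum_mul]
    apply Finset.sum_congr rfl
    intro i hi
    have hi' := Finset.mem_range.mp hi
    obtain ⟨e, rfl⟩ : ∃ e, m = i + 1 + e := ⟨m - (i + 1), by omega⟩
    have a1 : i + 1 + e - 1 - i = e := by omega
    have a2 : i + 1 + e - i = 1 + e := by omega
    rw [a1, a2]
    simp only [mul_pow, pow_add, pow_one]
    field_simp
  have hS : (τ0 - σ) * (∑ i ∈ Finset.range m,
          ((τ - σ) * l0) ^ i * ((τ - τ0) * ls) ^ (m - 1 - i)) =
        (((τ - σ) * l0) ^ m - ((τ - τ0) * ls) ^ m) * lt⁻¹ := by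
    rw [← hgs]; field_simp
  rw [hsum, hS, mul_pow, mul_pow]
  field_simp
  ring

lemma key_id {k n : ℕ} (hk : 2 ≤ k) (hn0 : 0 < n) (hn1 : n < 2 * k - 2) {c : ℝ} (hc : 0 < c)
    {τ τ0 σ : ℂ} (h1 : Good c τ) (h0 : Good c τ0) (h2 : Good c σ) :
    (τ - σ) ^ (2 * k - 1) * Phi n 1 (2 * k - 1) τ σ =
      (τ - τ0) ^ (2 * k - 1) * Phi n (2 * k - 1) 1 τ0 τ +
      ∑ i ∈ Finset.range (2 * k - 1), (τ - τ0) ^ (2 * k - 1 - 1 - i) * ((τ - σ) ^ i *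
        ((τ0 - σ) * Phi n (2 * k - 1 - i) (1 + i) τ0 σ)) := by
  unfold Phi
  simp only [← integral_const_mul]
  rw [← integral_finsetSum, ← integral_add]
  · apply integral_congr_ae
    filter_upwards [ae_pos] with x hx
    have := key_alg (L := aa x.1 x.2) (2 * k - 1) τ τ0 σ _ _ _ (ll_ne hc h0 x.1 hx)
      (ll_ne hc h2 x.1 hx) (ll_ne hc h1 x.1 hx) (ll_sub _ _ _ _) (ll_sub _ _ _ _)
    calc _ = (x.2 : ℂ) ^ n * ((τ - σ) ^ (2 * k - 1) *
          (ll x.1 x.2 τ ^ 1 * ll x.1 x.2 σ ^ (2 * k - 1))⁻¹) := by ring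
      _ = _ := by
        rw [this, mul_add, Finset.mul_sum]
        congr 1
        · ring
        · apply Finset.sum_congr rfl
          intro i _
          ring
  · exact (phi_integrable hk hn0 hn1 (by omega) hc h0 h1).const_mul _
  · apply integrable_finsetSum
    intro i hi
    have hi' := Finset.mem_range.mp hi
    exact (((phi_integrable hk hn0 hn1 (by omega) hc h0 h2).const_mul _).const_mul _).const_mul _
  · intro i hi
    have hi' := Finset.mem_range.mp hi
    exact (((phi_integrable hk hn0 hn1 (by omega) hc h0 h2).const_mul _).const_mul _).const_mul _

lemma slit_ne {a : ℂ} (ha : a ∈ Complex.slitPlane) {y : ℝ} (hy : 0 ≤ y) : (y : ℂ) + a ≠ 0 := by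
  intro h
  rw [Complex.mem_slitPlane_iff] at ha
  have h1 := congrArg Complex.re h
  have h2 := congrArg Complex.im h
  simp at h1 h2
  rcases ha with h | h
  · linarith
  · exact h h2

lemma ev_bound (a : ℂ) (n e : ℕ) : ∀ᶠ y : ℝ in Filter.atTop,
    ‖(y : ℂ) ^ n * (((y : ℂ) + a) ^ (n + 1 + e))⁻¹‖ ≤ 2 ^ (n + 1 + e) * (y ^ (1 + e))⁻¹ := by
  filter_upwards [Filter.eventually_ge_atTop (2 * ‖a‖), Filter.eventually_ge_atTop (1 : ℝ)]
    with y h1 h2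
  have hy : 0 < y := by linarith
  have h3 : y / 2 ≤ ‖(y : ℂ) + a‖ := by
    have := norm_sub_le ((y : ℂ) + a) a
    simp only [add_sub_cancel_right] at this
    rw [Complex.norm_real, Real.norm_of_nonneg hy.le] at this
    linarith
  rw [norm_mul, norm_pow, norm_inv, norm_pow, Complex.norm_real, Real.norm_of_nonneg hy.le]
  calc y ^ n * (‖(y : ℂ) + a‖ ^ (n + 1 + e))⁻¹ ≤ y ^ n * ((y / 2) ^ (n + 1 + e))⁻¹ := by
        gcongr
    _ = _ := by
      rw [div_pow, add_assoc, pow_add y n]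
      field_simp

lemma ev_tendsto (a : ℂ) (n e : ℕ) : Filter.Tendsto
    (fun y : ℝ => (y : ℂ) ^ n * (((y : ℂ) + a) ^ (n + 1 + e))⁻¹) Filter.atTop (nhds 0) := by
  apply squeeze_zero_norm' (ev_bound a n e)
  have h1 : Filter.Tendsto (fun y : ℝ => (y ^ (1 + e))⁻¹) Filter.atTop (nhds 0) :=
    (Filter.tendsto_pow_atTop (by omega)).inv_tendsto_atTop
  simpa using h1.const_mul ((2 : ℝ) ^ (n + 1 + e))

lemma ev_integrable {a : ℂ} (ha : a ∈ Complex.slitPlane) (n e : ℕ) : IntegrableOn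
    (fun y : ℝ => (y : ℂ) ^ n * (((y : ℂ) + a) ^ (n + 2 + e))⁻¹) (Set.Ioi 0) := by
  have hcont : ContinuousOn (fun y : ℝ => (y : ℂ) ^ n * (((y : ℂ) + a) ^ (n + 2 + e))⁻¹)
      (Set.Ici 0) := by
    apply ContinuousOn.mul (by fun_prop)
    apply ContinuousOn.inv₀ (by fun_prop)
    intro y hy
    exact pow_ne_zero _ (slit_ne ha hy)
  have hloc := hcont.locallyIntegrableOn (μ := volume) measurableSet_Ici
  refine (hloc.integrableOn_of_isBigO_atTop (g := fun y : ℝ => y ^ (-2 : ℝ)) ?_ ?_).mono_set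
    Set.Ioi_subset_Ici_self
  · apply Asymptotics.IsBigO.of_bound (2 ^ (n + 2 + e))
    filter_upwards [ev_bound a n (e + 1), Filter.eventually_ge_atTop (1 : ℝ)] with y h1 h2
    have hy : 0 < y := by linarith
    have e1 : n + 2 + e = n + 1 + (e + 1) := by ring
    rw [e1]
    refine h1.trans ?_
    gcongr
    rw [Real.norm_of_nonneg (by positivity), Real.rpow_neg hy.le]
    apply inv_anti₀ (by positivity)
    norm_cast
    exact pow_le_pow_right₀ h2 (by omega)
  · exact ⟨Set.Ioi 1, Filter.Ioi_mem_atTop 1, integrableOn_Ioi_rpow_of_lt (by norm_num) (by norm_num)⟩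

lemma ev_eval {a : ℂ} (ha : a ∈ Complex.slitPlane) (n e : ℕ) :
    ∫ y in Set.Ioi (0 : ℝ), (y : ℂ) ^ n * (((y : ℂ) + a) ^ (n + 2 + e))⁻¹ =
      (a ^ (e + 1))⁻¹ * ((n.factorial : ℂ) * e.factorial / (n + 1 + e).factorial) := by
  have ha0 : a ≠ 0 := Complex.slitPlane_ne_zero ha
  have hder : ∀ (m : ℕ) (y : ℝ), 0 ≤ y → HasDerivAt (fun y : ℝ => (((y : ℂ) + a) ^ m)⁻¹)
      (-(m : ℂ) * (((y : ℂ) + a) ^ (m + 1))⁻¹) y := by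
    intro m y hy
    have hne := slit_ne ha hy
    have h1 : HasDerivAt (fun y : ℝ => (y : ℂ) + a) 1 y :=
      (HasDerivAt.ofReal_comp (hasDerivAt_id y)).add_const a
    have h2 := (h1.fun_pow m).fun_inv (pow_ne_zero m hne)
    refine h2.congr_deriv ?_
    rcases m with _ | m
    · simp
    · simp only [Nat.add_sub_cancel]
      field_simp
      ring
  induction n with
  | zero =>
    have hintg := ev_integrable ha 0 e
    have hd : ∀ y : ℝ, 0 ≤ y → HasDerivAt
        (fun y : ℝ => (-((e : ℂ) + 1))⁻¹ * (((y : ℂ) + a) ^ (e + 1))⁻¹)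
        ((y : ℂ) ^ 0 * (((y : ℂ) + a) ^ (0 + 2 + e))⁻¹) y := by
      intro y hy
      refine ((hder (e + 1) y hy).const_mul _).congr_deriv ?_
      have : (e : ℂ) + 1 ≠ 0 := by exact_mod_cast Nat.succ_ne_zero e
      have e1 : 0 + 2 + e = e + 1 + 1 := by ring
      rw [e1]
      push_cast
      field_simp
    have ht := (ev_tendsto a 0 e).const_mul ((-((e : ℂ) + 1))⁻¹)
    have e2 : 0 + 1 + e = e + 1 := by ring
    simp only [pow_zero, one_mul, mul_zero, e2] at ht
    rw [integral_Ioi_of_hasDerivAt_of_tendsto (hd 0 le_rfl).continuousAt.continuousWithinAt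
      (fun y hy => hd y (le_of_lt hy)) hintg ht]
    have : (e : ℂ) + 1 ≠ 0 := by exact_mod_cast Nat.succ_ne_zero e
    have h4 : (e.factorial : ℂ) ≠ 0 := by exact_mod_cast Nat.factorial_ne_zero e
    rw [e2, Nat.factorial_succ, inv_neg]
    push_cast
    simp only [zero_add, zero_sub, Complex.ofReal_zero, Nat.factorial_zero, Nat.cast_one]
    field_simp
  | succ n ih =>
    have i1 := ev_integrable ha (n + 1) e
    have i0 := ev_integrable ha n e
    have hq : ((n : ℂ) + 2 + e) ≠ 0 := by
      have : ((n + 2 + e : ℕ) : ℂ) ≠ 0 := by exact_mod_cast (by omega : n + 2 + e ≠ 0)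
      push_cast at this; exact this
    have hd : ∀ y : ℝ, 0 ≤ y → HasDerivAt
        (fun y : ℝ => (y : ℂ) ^ (n + 1) * (((y : ℂ) + a) ^ (n + 2 + e))⁻¹)
        (((n : ℂ) + 1) * ((y : ℂ) ^ n * (((y : ℂ) + a) ^ (n + 2 + e))⁻¹) -
          ((n : ℂ) + 2 + e) * ((y : ℂ) ^ (n + 1) * (((y : ℂ) + a) ^ (n + 1 + 2 + e))⁻¹)) y := by
      intro y hy
      have h1 : HasDerivAt (fun y : ℝ => (y : ℂ) ^ (n + 1)) (((n : ℂ) + 1) * (y : ℂ) ^ n) y := by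
        have := (HasDerivAt.ofReal_comp (hasDerivAt_id y)).fun_pow (n + 1)
        simpa using this
      refine (h1.mul (hder (n + 2 + e) y hy)).congr_deriv ?_
      have e1 : n + 1 + 2 + e = n + 2 + e + 1 := by ring
      rw [e1]
      push_cast
      ring
    have ht := ev_tendsto a (n + 1) e
    have e3 : n + 1 + 1 + e = n + 2 + e := by ring
    rw [e3] at ht
    have hI := integral_Ioi_of_hasDerivAt_of_tendsto
      (hd 0 le_rfl).continuousAt.continuousWithinAt
      (fun y hy => hd y (le_of_lt hy))
      ((i0.const_mul ((n : ℂ) + 1)).sub (i1.const_mul ((n : ℂ) + 2 + e))) ht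
    rw [integral_sub (i0.const_mul ((n : ℂ) + 1)) (i1.const_mul ((n : ℂ) + 2 + e)),
      integral_const_mul, integral_const_mul, ih] at hI
    simp only [Complex.ofReal_zero, ne_eq, Nat.succ_ne_zero, not_false_eq_true, zero_pow, zero_mul,
      sub_zero] at hI
    have hI2 : ∫ y in Set.Ioi (0 : ℝ), (y : ℂ) ^ (n + 1) * (((y : ℂ) + a) ^ (n + 1 + 2 + e))⁻¹ =
        ((n : ℂ) + 1) * ((a ^ (e + 1))⁻¹ * ((n.factorial : ℂ) * e.factorial /
          (n + 1 + e).factorial)) / ((n : ℂ) + 2 + e) := by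
      rw [eq_div_iff hq]
      linear_combination -hI
    rw [hI2]
    have e4 : n + 1 + 1 + e = (n + 1 + e) + 1 := by ring
    rw [e4, Nat.factorial_succ (n + 1 + e), Nat.factorial_succ n]
    have h5 : ((n + 1 + e).factorial : ℂ) ≠ 0 := by exact_mod_cast Nat.factorial_ne_zero _
    have e5 : ((n + 1 + e + 1 : ℕ) : ℂ) = (n : ℂ) + 2 + e := by push_cast; ring
    rw [Nat.cast_mul (n + 1 + e + 1), e5]
    push_cast
    field_simp

/-- `f` has Wirtinger derivatives `a`, `b` at `τ`. -/
def HasW (f : ℂ → ℂ) (a b τ : ℂ) : Prop :=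
  HasFDerivAt (𝕜 := ℝ) f (a • (1 : ℂ →L[ℝ] ℂ) + b • (Complex.conjCLE : ℂ →L[ℝ] ℂ)) τ

lemma HasW.dtau_eq {f : ℂ → ℂ} {a b τ : ℂ} (h : HasW f a b τ) : dtau f τ = a := by
  unfold dtau
  rw [HasFDerivAt.fderiv h]
  simp
  linear_combination (-a/2 + b/2) * Complex.I_mul_I

lemma HasW.dtaubar_eq {f : ℂ → ℂ} {a b τ : ℂ} (h : HasW f a b τ) : dtaubar f τ = b := by
  unfold dtaubar
  rw [HasFDerivAt.fderiv h]
  simp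
  linear_combination (a/2 - b/2) * Complex.I_mul_I

lemma HasW.add {f g : ℂ → ℂ} {a b a' b' τ : ℂ} (h : HasW f a b τ) (h' : HasW g a' b' τ) :
    HasW (fun x => f x + g x) (a + a') (b + b') τ := by
  unfold HasW at *
  refine (HasFDerivAt.fun_add h h').congr_fderiv ?_
  ext x
  simp
  ring

lemma HasW.mul {f g : ℂ → ℂ} {a b a' b' τ : ℂ} (h : HasW f a b τ) (h' : HasW g a' b' τ) :
    HasW (fun x => f x * g x) (a * g τ + f τ * a') (b * g τ + f τ * b') τ := by
  unfold HasW at *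
  refine (HasFDerivAt.fun_mul h h').congr_fderiv ?_
  ext x
  simp
  ring

lemma HasW.of_hol {f : ℂ → ℂ} {a τ : ℂ} (h : HasDerivAt f a τ) : HasW f a 0 τ := by
  unfold HasW
  refine h.complexToReal_fderiv.congr_fderiv ?_
  simp

lemma HasW.of_conj {g : ℂ → ℂ} {b τ : ℂ} (h : HasDerivAt g b (starRingEnd ℂ τ)) :
    HasW (fun x => g (starRingEnd ℂ x)) 0 b τ := by
  unfold HasW
  have h1 : HasFDerivAt (𝕜 := ℝ) (fun x : ℂ => starRingEnd ℂ x)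
      (Complex.conjCLE : ℂ →L[ℝ] ℂ) τ := Complex.conjCLE.hasFDerivAt
  have h2 := HasFDerivAt.comp τ h.complexToReal_fderiv h1
  refine h2.congr_fderiv ?_
  ext x
  simp

lemma HasW.congr {f g : ℂ → ℂ} {a b τ : ℂ} (h : HasW f a b τ) (e : g =ᶠ[nhds τ] f) :
    HasW g a b τ := HasFDerivAt.congr_of_eventuallyEq h e

lemma HasW.zero (τ : ℂ) : HasW (fun _ => 0) 0 0 τ := by
  simpa using HasW.of_hol (hasDerivAt_const τ (0 : ℂ))

lemma HasW.sum {f : ℕ → ℂ → ℂ} {a b : ℕ → ℂ} {τ : ℂ} (m : ℕ)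
    (h : ∀ j, HasW (f j) (a j) (b j) τ) :
    HasW (fun x => ∑ j ∈ Finset.range m, f j x) (∑ j ∈ Finset.range m, a j)
      (∑ j ∈ Finset.range m, b j) τ := by
  induction m with
  | zero => simpa using HasW.zero τ
  | succ m ih =>
    simp only [Finset.sum_range_succ]
    exact ih.add (h m)

/-- polynomials of degree `< m` in `τ - τ0` with coefficients holomorphic in `σ`. -/
def SS (τ0 : ℂ) (ε : ℝ) (m : ℕ) (F : ℂ → ℂ → ℂ) : Prop :=
  ∃ g : ℕ → ℂ → ℂ, (∀ j, DifferentiableOn ℂ (g j) (Metric.ball (starRingEnd ℂ τ0) ε)) ∧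
    ∀ τ σ, F τ σ = ∑ j ∈ Finset.range m, (τ - τ0) ^ j * g j σ

lemma SS.add {τ0 : ℂ} {ε : ℝ} {m : ℕ} {F G : ℂ → ℂ → ℂ} (hF : SS τ0 ε m F) (hG : SS τ0 ε m G) :
    SS τ0 ε m (fun τ σ => F τ σ + G τ σ) := by
  obtain ⟨f, hf, hf'⟩ := hF
  obtain ⟨g, hg, hg'⟩ := hG
  refine ⟨fun j σ => f j σ + g j σ, fun j => (hf j).add (hg j), fun τ σ => ?_⟩
  simp only []
  rw [hf', hg', ← Finset.sum_add_distrib]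
  exact Finset.sum_congr rfl fun j _ => by ring

lemma SS.sum {τ0 : ℂ} {ε : ℝ} {m : ℕ} {F : ℕ → ℂ → ℂ → ℂ} (N : ℕ)
    (hF : ∀ i < N, SS τ0 ε m (F i)) :
    SS τ0 ε m (fun τ σ => ∑ i ∈ Finset.range N, F i τ σ) := by
  induction N with
  | zero => exact ⟨fun _ _ => 0, fun j => differentiableOn_const 0, fun τ σ => by simp⟩
  | succ N ih =>
    simp only [Finset.sum_range_succ]
    exact (ih fun i hi => hF i (by omega)).add (hF N (by omega))

lemma SS.term {τ0 : ℂ} {ε : ℝ} {m : ℕ} (i : ℕ) : ∀ (e : ℕ) (h : ℂ → ℂ),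
    DifferentiableOn ℂ h (Metric.ball (starRingEnd ℂ τ0) ε) → e + i < m →
    SS τ0 ε m (fun τ σ => (τ - τ0) ^ e * ((τ - σ) ^ i * h σ)) := by
  induction i with
  | zero =>
    intro e h hh hm
    refine ⟨fun j σ => if j = e then h σ else 0, fun j => ?_, fun τ σ => ?_⟩
    · by_cases hj : j = e
      · simpa [hj] using hh
      · simp [hj]
    · simp
      intro hme
      omega
  | succ i ih =>
    intro e h hh hm
    have h1 := ih (e + 1) h hh (by omega)
    have h2 := ih e (fun σ => (τ0 - σ) * h σ)
      ((differentiableOn_const _).sub differentiableOn_id |>.mul hh) (by omega)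
    convert h1.add h2 using 3
    ring

lemma iter_aux {τ0 : ℂ} {ε : ℝ} (hε : 0 < ε) (m : ℕ) : ∀ (f K : ℂ → ℂ) (g : ℕ → ℂ → ℂ),
    DifferentiableOn ℂ K (Metric.ball τ0 ε) →
    (∀ j, DifferentiableOn ℂ (g j) (Metric.ball (starRingEnd ℂ τ0) ε)) →
    (∀ τ ∈ Metric.ball τ0 ε, f τ = (τ - τ0) ^ m * K τ +
      ∑ j ∈ Finset.range m, (τ - τ0) ^ j * g j (starRingEnd ℂ τ)) →
    (Dop^[m] f) τ0 = (2 * (π : ℂ) * Complex.I)⁻¹ ^ m * (m.factorial : ℂ) * K τ0 := by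
  induction m with
  | zero =>
    intro f K g hK hg hf
    simpa using hf τ0 (Metric.mem_ball_self hε)
  | succ m ih =>
    intro f K g hK hg hf
    rw [Function.iterate_succ_apply]
    set c := (2 * (π : ℂ) * Complex.I)⁻¹ with hc
    rw [ih (Dop f) (fun τ => c * (((m : ℂ) + 1) * K τ + (τ - τ0) * deriv K τ))
      (fun j σ => c * ((j : ℂ) + 1) * g (j + 1) σ) ?_ ?_ ?_]
    · rw [Nat.factorial_succ]
      push_cast
      simp
      ring
    · refine (differentiableOn_const c).mul ((hK.const_mul _).add (DifferentiableOn.mul ?_ ?_))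
      · fun_prop
      · exact hK.deriv Metric.isOpen_ball
    · intro j
      exact (hg (j + 1)).const_mul _
    · intro τ hτ
      have hconj : starRingEnd ℂ τ ∈ Metric.ball (starRingEnd ℂ τ0) ε := by
        rw [Metric.mem_ball, Complex.dist_conj_conj]; exact hτ
      have hpow : ∀ j : ℕ, HasDerivAt (fun x : ℂ => (x - τ0) ^ j)
          ((j : ℂ) * (τ - τ0) ^ (j - 1)) τ := by
        intro j
        simpa using ((hasDerivAt_id τ).sub_const τ0).fun_pow j
      have hKd : HasDerivAt K (deriv K τ) τ :=
        (hK.differentiableAt (Metric.isOpen_ball.mem_nhds hτ)).hasDerivAt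
      have hgd : ∀ j, HasDerivAt (g j) (deriv (g j) (starRingEnd ℂ τ)) (starRingEnd ℂ τ) :=
        fun j => ((hg j).differentiableAt (Metric.isOpen_ball.mem_nhds hconj)).hasDerivAt
      have hW := ((HasW.of_hol (hpow (m + 1))).mul (HasW.of_hol hKd)).add
        (HasW.sum (m + 1) fun j => (HasW.of_hol (hpow j)).mul (HasW.of_conj (hgd j)))
      have hW2 := hW.congr (g := f) (by
        filter_upwards [Metric.isOpen_ball.mem_nhds hτ] with x hx
        exact hf x hx)
      unfold Dop
      rw [hW2.dtau_eq, ← hc, Finset.sum_range_succ']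
      simp only [Nat.add_sub_cancel, Nat.cast_add, Nat.cast_one, mul_zero, add_zero, Nat.cast_zero,
        zero_mul]
      rw [mul_add, Finset.mul_sum]
      congr 1
      · ring
      · exact Finset.sum_congr rfl fun j _ => by ring

lemma main_calc {τ0 : ℂ} {ε : ℝ} (hε : 0 < ε) {m : ℕ} (hm : 0 < m) {f K : ℂ → ℂ}
    {F : ℂ → ℂ → ℂ} (hF : SS τ0 ε m F) (hK : DifferentiableOn ℂ K (Metric.ball τ0 ε))
    (hf : ∀ τ ∈ Metric.ball τ0 ε, f τ = (τ - τ0) ^ m * K τ + F τ (starRingEnd ℂ τ)) :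
    (Dop^[m] f) τ0 = (2 * (π : ℂ) * Complex.I)⁻¹ ^ m * (m.factorial : ℂ) * K τ0 ∧
    dtaubar f τ0 = deriv (F τ0) (starRingEnd ℂ τ0) := by
  obtain ⟨g, hg, hg'⟩ := hF
  refine ⟨iter_aux hε m f K g hK hg fun τ hτ => by rw [hf τ hτ, hg'], ?_⟩
  have hg0 : F τ0 = g 0 := by
    funext σ
    rw [hg' τ0 σ]
    obtain ⟨m, rfl⟩ : ∃ m', m = m' + 1 := ⟨m - 1, by omega⟩
    rw [Finset.sum_range_succ']
    simp
  have hτ : τ0 ∈ Metric.ball τ0 ε := Metric.mem_ball_self hε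
  have hconj : starRingEnd ℂ τ0 ∈ Metric.ball (starRingEnd ℂ τ0) ε := Metric.mem_ball_self hε
  have hpow : ∀ j : ℕ, HasDerivAt (fun x : ℂ => (x - τ0) ^ j)
      ((j : ℂ) * (τ0 - τ0) ^ (j - 1)) τ0 := by
    intro j
    simpa using ((hasDerivAt_id τ0).sub_const τ0).fun_pow j
  have hKd : HasDerivAt K (deriv K τ0) τ0 :=
    (hK.differentiableAt (Metric.isOpen_ball.mem_nhds hτ)).hasDerivAt
  have hgd : ∀ j, HasDerivAt (g j) (deriv (g j) (starRingEnd ℂ τ0)) (starRingEnd ℂ τ0) :=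
    fun j => ((hg j).differentiableAt (Metric.isOpen_ball.mem_nhds hconj)).hasDerivAt
  have hW := ((HasW.of_hol (hpow m)).mul (HasW.of_hol hKd)).add
    (HasW.sum m fun j => (HasW.of_hol (hpow j)).mul (HasW.of_conj (hgd j)))
  have hW2 := hW.congr (g := f) (by
    filter_upwards [Metric.isOpen_ball.mem_nhds hτ] with x hx
    rw [hf x hx, hg'])
  rw [hW2.dtaubar_eq, hg0]
  obtain ⟨m, rfl⟩ : ∃ m', m = m' + 1 := ⟨m - 1, by omega⟩
  rw [Finset.sum_range_succ']
  simp

/-- the series in `R_n`. -/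
def TT (k n : ℕ) (p : ℂ) : ℂ :=
  ∑' M : SL2Z, jfac M p ^ (-2 * (k : ℤ)) * moeb M p ^ (-(n : ℤ) - 1)

lemma moeb_ne (M : SL2Z) {p : ℂ} (hp : p.im ≠ 0) : moeb M p ≠ 0 := by
  have h1 := jfac_ne M hp
  unfold jfac at h1
  exact div_ne_zero (nfac_ne M hp) h1

lemma jfac_S (M : SL2Z) {p : ℂ} (hp : p.im ≠ 0) :
    jfac (ModularGroup.S * M) p = jfac M p * moeb M p := by
  have h1 := jfac_ne M hp
  unfold jfac at h1
  unfold jfac moeb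
  rw [S_mul_10, S_mul_11]
  exact (mul_div_cancel₀ _ h1).symm

lemma moeb_S (M : SL2Z) (p : ℂ) :
    moeb (ModularGroup.S * M) p = -(moeb M p)⁻¹ := by
  unfold moeb
  rw [S_mul_10, S_mul_11, S_mul_00, S_mul_01, inv_div, ← neg_div]
  congr 1
  push_cast
  ring

lemma TT_conj (k n : ℕ) (p : ℂ) : TT k n (starRingEnd ℂ p) = starRingEnd ℂ (TT k n p) := by
  unfold TT
  rw [Complex.conj_tsum]
  congr 1
  funext M
  have hm : moeb M (starRingEnd ℂ p) = starRingEnd ℂ (moeb M p) := by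
    unfold moeb; simp
  have hjc : jfac M (starRingEnd ℂ p) = starRingEnd ℂ (jfac M p) := by
    unfold jfac; simp
  rw [hm, hjc, map_mul, map_zpow₀, map_zpow₀]

lemma reindex {k n e : ℕ} (hke : 2 * k = n + 2 + e) {p : ℂ} (hp : p.im ≠ 0) :
    ∑' M : SL2Z, (jfac M p ^ (2 * k))⁻¹ * (moeb M p ^ (e + 1))⁻¹ = (-1) ^ (n + 1) * TT k n p := by
  unfold TT
  rw [← (Equiv.mulLeft (ModularGroup.S : SL2Z)).tsum_eq, ← tsum_mul_left]
  congr 1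
  funext M
  simp only [Equiv.coe_mulLeft]
  rw [jfac_S M hp, moeb_S]
  have h1 := jfac_ne M hp
  have h2 := moeb_ne M hp
  have e1 : (-2 * (k : ℤ)) = -((2 * k : ℕ) : ℤ) := by push_cast; ring
  have e2 : (-(n : ℤ) - 1) = -((n + 1 : ℕ) : ℤ) := by push_cast; ring
  rw [e1, e2, zpow_neg, zpow_neg, zpow_natCast, zpow_natCast, neg_pow, mul_pow]
  have hs : ((-1 : ℂ) ^ (e + 1))⁻¹ = (-1) ^ (n + 1) := by
    rw [inv_eq_iff_eq_inv, ← inv_pow]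
    have : ((-1 : ℂ))⁻¹ = -1 := by norm_num
    rw [this]
    have hpar : Even ((e + 1) + (n + 1)) := ⟨k, by omega⟩
    have h3 : (-1 : ℂ) ^ (e + 1) * (-1) ^ (n + 1) = 1 := by rw [← pow_add, hpar.neg_one_pow]
    have h4 : (-1 : ℂ) ^ (n + 1) * (-1) ^ (n + 1) = 1 := by
      rw [← mul_pow]; norm_num
    linear_combination (-1 : ℂ) ^ (n + 1) * h3 - (-1 : ℂ) ^ (e + 1) * h4
  rw [mul_inv ((-1 : ℂ) ^ (e + 1)), hs, inv_pow, inv_inv]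
  have e3 : moeb M p ^ (2 * k) = moeb M p ^ (n + 1) * moeb M p ^ (e + 1) := by
    rw [← pow_add]; congr 1; omega
  rw [e3]
  field_simp

lemma Q_eval {k n e : ℕ} (hk : 2 ≤ k) (hn0 : 0 < n) (hn1 : n < 2 * k - 2)
    (hke : 2 * k = n + 2 + e) {c : ℝ} (hc : 0 < c) {p : ℂ}
    (hp : p.im ≠ 0) (hg : Good c p) (hs : ∀ M, Complex.I * moeb M p ∈ Complex.slitPlane) :
    Phi n (2 * k) 0 p p = (Complex.I ^ (2 * k))⁻¹ * (Complex.I ^ (e + 1))⁻¹ * ((-1) ^ (n + 1)) *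
      ((n.factorial : ℂ) * e.factorial / (n + 1 + e).factorial) * TT k n p := by
  have hintg := phi_integrable (i := 2 * k) (j := 0) hk hn0 hn1 (by omega) hc hg hg
  unfold Phi
  rw [integral_muX' hintg]
  have hterm : ∀ M : SL2Z, (∫ y in Set.Ioi (0 : ℝ), (y : ℂ) ^ n *
      (ll M y p ^ (2 * k) * ll M y p ^ 0)⁻¹) =
      ((Complex.I ^ (2 * k))⁻¹ * (Complex.I ^ (e + 1))⁻¹ *
      ((n.factorial : ℂ) * e.factorial / (n + 1 + e).factorial)) *
      ((jfac M p ^ (2 * k))⁻¹ * (moeb M p ^ (e + 1))⁻¹) := by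
    intro M
    have h1 : ∀ y : ℝ, (y : ℂ) ^ n * (ll M y p ^ (2 * k) * ll M y p ^ 0)⁻¹ =
        ((Complex.I ^ (2 * k))⁻¹ * (jfac M p ^ (2 * k))⁻¹) *
        ((y : ℂ) ^ n * (((y : ℂ) + Complex.I * moeb M p) ^ (n + 2 + e))⁻¹) := by
      intro y
      have h2 : ll M y p = Complex.I * jfac M p * ((y : ℂ) + Complex.I * moeb M p) := by
        rw [ll_eq M y hp]
        linear_combination -(jfac M p * moeb M p) * Complex.I_mul_I
      rw [h2, pow_zero, mul_one, mul_pow, mul_pow, ← hke, mul_inv, mul_inv]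
      ring
    simp only [h1]
    rw [integral_const_mul, ev_eval (hs M), mul_pow, mul_inv]
    ring
  simp only [hterm]
  rw [tsum_mul_left, reindex hke hp]
  ring

lemma slit1 {τ : ℂ} (hτ : 0 < τ.im) (hE : τ ∉ E1) (M : SL2Z) :
    Complex.I * moeb M τ ∈ Complex.slitPlane := by
  rw [Complex.mem_slitPlane_iff]
  right
  have : (moeb M τ).re ≠ 0 := fun h => hE (mem_E1_of M hτ h)
  simpa using this

lemma slit2 {τ : ℂ} (hτ : 0 < τ.im) (M : SL2Z) :
    Complex.I * moeb M (starRingEnd ℂ τ) ∈ Complex.slitPlane := by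
  rw [Complex.mem_slitPlane_iff]
  left
  have hcim : (starRingEnd ℂ τ).im ≠ 0 := by simpa using hτ.ne'
  have h1 := moeb_im M hcim
  have h2 := Complex.normSq_pos.mpr (jfac_ne M hcim)
  simp only [Complex.mul_re, Complex.I_re, zero_mul, Complex.I_im, one_mul, zero_sub]
  rw [h1, ← neg_div]
  apply div_pos _ h2
  simpa using hτ

/-- raw values of both operators. -/
lemma raw {k n : ℕ} (hk : 2 ≤ k) (hn0 : 0 < n) (hn1 : n < 2 * k - 2) {c ε : ℝ} (hc : 0 < c)
    (hε : 0 < ε) {τ : ℂ} (hετ : ε ≤ τ.im) (h1 : ∀ p ∈ Metric.ball τ ε, Good c p)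
    (h2 : ∀ p ∈ Metric.ball (starRingEnd ℂ τ) ε, Good c p) :
    (Dop^[2 * k - 1] (Hlhmf k n)) τ = (2 * (π : ℂ) * Complex.I)⁻¹ ^ (2 * k - 1) *
      ((2 * k - 1).factorial : ℂ) * ((4 * (π : ℂ) * Complex.I)⁻¹ * Phi n (2 * k) 0 τ τ) ∧
    dtaubar (Hlhmf k n) τ = (4 * (π : ℂ) * Complex.I)⁻¹ * (-((2 * k - 1 : ℕ) : ℂ) *
      (τ - starRingEnd ℂ τ) ^ (2 * k - 2) *
        Phi n (2 * k) 0 (starRingEnd ℂ τ) (starRingEnd ℂ τ)) := by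
  set C := (4 * (π : ℂ) * Complex.I)⁻¹ with hC
  have g1 : Good c τ := h1 τ (Metric.mem_ball_self hε)
  have g2 : Good c (starRingEnd ℂ τ) := h2 _ (Metric.mem_ball_self hε)
  obtain ⟨m, hm⟩ : ∃ m, 2 * k - 1 = m + 1 := ⟨2 * k - 2, by omega⟩
  have hm' : 2 * k - 2 = m := by omega
  have hm'' : 2 * k = m + 2 := by omega
  have hSS : SS τ ε (2 * k - 1) (fun x σ => ∑ i ∈ Finset.range (2 * k - 1),
      (x - τ) ^ (2 * k - 1 - 1 - i) * ((x - σ) ^ i *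
        (C * ((τ - σ) * Phi n (2 * k - 1 - i) (1 + i) τ σ)))) := by
    apply SS.sum
    intro i hi
    apply SS.term i _ (fun σ => C * ((τ - σ) * Phi n (2 * k - 1 - i) (1 + i) τ σ)) _ (by omega)
    intro σ hσ
    have := (phi_hasDerivAt (i := 2 * k - 1 - i) (j := 1 + i) hk hn0 hn1 (by omega) hc g1 h2
      hσ).2.differentiableAt
    apply DifferentiableAt.differentiableWithinAt
    exact (((differentiableAt_const τ).sub differentiableAt_id).mul this).const_mul C
  have hK : DifferentiableOn ℂ (fun x => C * Phi n (2 * k - 1) 1 τ x) (Metric.ball τ ε) := by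
    intro x hx
    have := (phi_hasDerivAt (i := 2 * k - 1) (j := 1) hk hn0 hn1 (by omega) hc g1 h1
      hx).2.differentiableAt
    exact (this.const_mul C).differentiableWithinAt
  obtain ⟨r1, r2⟩ := main_calc hε (by omega) hSS hK (f := Hlhmf k n) (by
    intro x hx
    have hconj : starRingEnd ℂ x ∈ Metric.ball (starRingEnd ℂ τ) ε := by
      rw [Metric.mem_ball, Complex.dist_conj_conj]; exact hx
    have hxim : 0 < x.im := by
      have h3 := Complex.abs_im_le_norm (x - τ)
      rw [Metric.mem_ball, dist_eq_norm] at hx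
      rw [Complex.sub_im] at h3
      have := abs_lt.mp (lt_of_le_of_lt h3 hx)
      linarith [this.1]
    rw [Hlhmf_eq hk hn0 hn1 hc hxim (h1 x hx) (h2 _ hconj),
      key_id hk hn0 hn1 hc (h1 x hx) g1 (h2 _ hconj), ← hC, mul_add, Finset.mul_sum]
    congr 1
    · ring
    · exact Finset.sum_congr rfl fun i _ => by ring)
  constructor
  · rw [r1]
    congr 2
    unfold Phi
    congr 1
    funext x
    rw [hm, hm'']
    congr 2
    ring
  · rw [r2]
    have hfun : (fun σ => ∑ i ∈ Finset.range (2 * k - 1),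
      (τ - τ) ^ (2 * k - 1 - 1 - i) * ((τ - σ) ^ i *
        (C * ((τ - σ) * Phi n (2 * k - 1 - i) (1 + i) τ σ)))) =
        fun σ => C * ((τ - σ) ^ (m + 1) * Phi n 1 (m + 1) τ σ) := by
      funext σ
      rw [hm, Finset.sum_range_succ, Finset.sum_eq_zero]
      · have e1 : m + 1 - m = 1 := by omega
        rw [e1, add_comm 1 m]
        simp
        ring
      · intro i hi
        have hi' := Finset.mem_range.mp hi
        rw [sub_self, zero_pow (by omega), zero_mul]
    simp only [hfun]
    obtain ⟨i1, d1⟩ := phi_hasDerivAt (i := 1) (j := m + 1) hk hn0 hn1 (by omega) hc g1 h2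
      (Metric.mem_ball_self hε)
    have hpow : HasDerivAt (fun σ : ℂ => (τ - σ) ^ (m + 1))
        (-((m : ℂ) + 1) * (τ - starRingEnd ℂ τ) ^ m) (starRingEnd ℂ τ) := by
      refine (((hasDerivAt_id (starRingEnd ℂ τ)).const_sub τ).fun_pow (m + 1)).congr_deriv ?_
      simp
      ring
    rw [((hpow.fun_mul d1).const_mul C).deriv, hm, hm', hm'']
    congr 1
    have i0 := phi_integrable (i := 1) (j := m + 1) hk hn0 hn1 (by omega) hc g1 g2
    have hcomb : Phi n (m + 2) 0 (starRingEnd ℂ τ) (starRingEnd ℂ τ) =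
        Phi n 1 (m + 1) τ (starRingEnd ℂ τ) + (τ - starRingEnd ℂ τ) * (-((m : ℂ) + 1)⁻¹) *
        ∫ x : SL2Z × ℝ, (x.2 : ℂ) ^ n * (-((m + 1 : ℕ) : ℂ) * aa x.1 x.2 *
        (ll x.1 x.2 τ ^ 1 * ll x.1 x.2 (starRingEnd ℂ τ) ^ (m + 1 + 1))⁻¹) ∂muX := by
      unfold Phi
      rw [← integral_const_mul, ← integral_add i0 (i1.const_mul _)]
      apply integral_congr_ae
      filter_upwards [ae_pos] with x hx
      have n1 := ll_ne hc g1 x.1 hx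
      have n2 := ll_ne hc g2 x.1 hx
      have hs := ll_sub x.1 x.2 τ (starRingEnd ℂ τ)
      have hm0 : (m : ℂ) + 1 ≠ 0 := by exact_mod_cast Nat.succ_ne_zero m
      push_cast
      set A := ll x.1 x.2 τ
      set B := ll x.1 x.2 (starRingEnd ℂ τ)
      have hA : A = B + aa x.1 x.2 * (τ - starRingEnd ℂ τ) := by rw [← hs]; ring
      rw [pow_zero, mul_one, pow_one]
      have e1 : B ^ (m + 2) = B ^ (m + 1) * B := by ring
      rw [show m + 1 + 1 = m + 2 from rfl, e1]
      field_simp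
      rw [hA]
      ring
    rw [hcomb]
    have hm0 : (m : ℂ) + 1 ≠ 0 := by exact_mod_cast Nat.succ_ne_zero m
    push_cast
    field_simp
    ring

/-- images of `H_{1-k,n}` under `ξ_{2-2k}` and `𝒟^{2k-1}`. -/
theorem xi_D_of_Hlhmf (k n : ℕ) (hk : 2 ≤ k) (hn0 : 0 < n) (hn1 : n < 2 * k - 2)
    (τ : ℂ) (hτ : 0 < τ.im) (hτE : τ ∉ E1) :
    xiOp (2 - 2 * k) (Hlhmf k n) τ = - Rnform k n τ ∧
    (Dop^[2 * k - 1] (Hlhmf k n)) τ =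
      (-1 : ℂ) ^ (n + 1) * ((Nat.factorial (2 * k - 2) : ℂ) / (4 * (π : ℂ)) ^ (2 * k - 1)) *
        Rnform k n τ := by
  obtain ⟨c, ε, hc, hε, hετ, h1, h2⟩ := exists_good hτ hτE
  obtain ⟨r1, r2⟩ := raw hk hn0 hn1 hc hε hετ h1 h2
  obtain ⟨e, hke⟩ : ∃ e, 2 * k = n + 2 + e := ⟨2 * k - 2 - n, by omega⟩
  have hcim : (starRingEnd ℂ τ).im ≠ 0 := by simpa using hτ.ne'
  have q1 := Q_eval hk hn0 hn1 hke hc hτ.ne' (h1 τ (Metric.mem_ball_self hε)) (slit1 hτ hτE)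
  have q2 := Q_eval hk hn0 hn1 hke hc hcim (h2 _ (Metric.mem_ball_self hε)) (slit2 hτ)
  rw [TT_conj] at q2
  have hR : Rnform k n τ = (2 : ℂ) ^ (2 * k - 3) / (Complex.I ^ (2 * k - 1 - n) *
    (Nat.choose (2 * k - 2) n : ℂ) * (π : ℂ)) * TT k n τ := rfl
  rw [hR]
  set T := TT k n τ
  have hpi : (π : ℂ) ≠ 0 := by exact_mod_cast Real.pi_ne_zero
  have hv : (τ.im : ℂ) ≠ 0 := by exact_mod_cast hτ.ne'
  obtain ⟨m, hm⟩ : ∃ m, 2 * k = m + 3 := ⟨2 * k - 3, by omega⟩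
  have hfac : ((2 * k - 1).factorial : ℂ) *
      ((n.factorial : ℂ) * e.factorial / (n + 1 + e).factorial) =
      ((2 * k - 2).factorial : ℂ) * (Nat.choose (2 * k - 2) n : ℂ)⁻¹ ∧
      ((2 * k - 1 : ℕ) : ℂ) * ((n.factorial : ℂ) * e.factorial / (n + 1 + e).factorial) =
      (Nat.choose (2 * k - 2) n : ℂ)⁻¹ := by
    have hle : n ≤ 2 * k - 2 := by omega
    have h3 := Nat.choose_mul_factorial_mul_factorial hle
    have e1 : 2 * k - 2 - n = e := by omega
    have e2 : n + 1 + e = (2 * k - 2) + 1 := by omega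
    have e3 : 2 * k - 1 = (2 * k - 2) + 1 := by omega
    rw [e1] at h3
    have h4 : (Nat.choose (2 * k - 2) n : ℂ) * n.factorial * e.factorial =
      ((2 * k - 2).factorial : ℂ) := by exact_mod_cast h3
    have hc0 : (Nat.choose (2 * k - 2) n : ℂ) ≠ 0 := by
      exact_mod_cast (Nat.choose_pos hle).ne'
    have hf0 : ((2 * k - 2).factorial : ℂ) ≠ 0 := by exact_mod_cast Nat.factorial_ne_zero _
    have hk0 : ((2 * k - 2 : ℕ) : ℂ) + 1 ≠ 0 := by
      exact_mod_cast Nat.succ_ne_zero (2 * k - 2)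
    rw [e2, e3, Nat.factorial_succ]
    rw [Nat.cast_mul, Nat.cast_succ]
    constructor
    · field_simp
      linear_combination h4
    · field_simp
      linear_combination h4
  obtain ⟨f1, f2⟩ := hfac
  have a1 : 2 * k - 3 = m := by omega
  have a2 : 2 * k - 1 - n = e + 1 := by omega
  have a3 : 2 * k - 1 = m + 2 := by omega
  have a4 : 2 * k - 2 = m + 1 := by omega
  have hI0 : Complex.I ≠ 0 := Complex.I_ne_zero
  set β := ((n.factorial : ℂ) * e.factorial / (n + 1 + e).factorial)
  set b := (Nat.choose (2 * k - 2) n : ℂ) with hb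
  constructor
  · unfold xiOp
    rw [r2, q2]
    have e4 : (2 - 2 * (k : ℤ)) = -((m + 1 : ℕ) : ℤ) := by push_cast; omega
    have e5 : τ - starRingEnd ℂ τ = 2 * Complex.I * τ.im := by
      rw [Complex.sub_conj]; push_cast; ring
    have hβ : starRingEnd ℂ β = β := by simp [β]
    rw [e4, e5, zpow_neg, zpow_natCast, a4, a1, a2]
    simp only [map_mul, map_inv₀, map_pow, map_neg, Complex.conj_I, Complex.conj_ofReal, hβ,
      map_natCast, map_ofNat, map_one, Complex.conj_conj]
    have hp1 : (-Complex.I) ^ (2 * k) = Complex.I ^ (2 * k) := by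
      rw [neg_pow, (even_two_mul k).neg_one_pow, one_mul]
    have hp2 : (-Complex.I) ^ (m + 1) = Complex.I ^ (m + 1) := by
      rw [neg_pow, Even.neg_one_pow (⟨k - 1, by omega⟩ : Even (m + 1)), one_mul]
    have hp3 : ((-Complex.I) ^ (e + 1))⁻¹ * (-1) ^ (n + 1) = (Complex.I ^ (e + 1))⁻¹ := by
      have hpar : (-1 : ℂ) ^ (e + 1) * (-1) ^ (n + 1) = 1 := by
        rw [← pow_add, Even.neg_one_pow (⟨k, by omega⟩ : Even (e + 1 + (n + 1)))]
      have h0 : (-1 : ℂ) ^ (e + 1) ≠ 0 := pow_ne_zero _ (by norm_num)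
      rw [neg_pow, mul_inv, inv_eq_of_mul_eq_one_right hpar]
      have h4 : (-1 : ℂ) ^ (n + 1) * (-1) ^ (n + 1) = 1 := by
        rw [← mul_pow]; norm_num
      linear_combination (Complex.I ^ (e + 1))⁻¹ * h4
    have hp4 : (Complex.I ^ (2 * k))⁻¹ = -(Complex.I ^ (m + 1))⁻¹ := by
      rw [hm, show m + 3 = (m + 1) + 2 from rfl, pow_add, Complex.I_sq]
      simp
    have hp5 : (2 * -Complex.I * (τ.im : ℂ)) ^ (m + 1) =
        2 ^ (m + 1) * Complex.I ^ (m + 1) * (τ.im : ℂ) ^ (m + 1) := by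
      rw [mul_pow, mul_pow, hp2]
    rw [hp1, hp5, hp4]
    have hI1 : Complex.I ^ (m + 1) ≠ 0 := pow_ne_zero _ hI0
    have hv1 : (τ.im : ℂ) ^ (m + 1) ≠ 0 := pow_ne_zero _ hv
    have key : ∀ X Y Z V W : ℂ, X ≠ 0 → V ≠ 0 → ∀ N : ℂ,
        2 * Complex.I * V⁻¹ * ((4 * (π : ℂ) * -Complex.I)⁻¹ * (-N * (2 ^ (m + 1) * X * V) *
          (-X⁻¹ * Y * Z * β * W))) = -(2 ^ m / π * (N * β) * (Y * Z) * W) := by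
      intro X Y Z V W hX hV N
      rw [pow_succ]
      field_simp
      ring
    rw [key _ _ _ _ _ hI1 hv1, f2, hp3]
    field_simp
  · rw [r1, q1, a1, a2]
    have hp : (Complex.I)⁻¹ ^ (2 * k - 1) * Complex.I⁻¹ * (Complex.I ^ (2 * k))⁻¹ = 1 := by
      have e6 : 2 * k = 2 * k - 1 + 1 := by omega
      have : (Complex.I)⁻¹ ^ (2 * k - 1) * Complex.I⁻¹ = (Complex.I⁻¹) ^ (2 * k) := by
        rw [← pow_succ, ← e6]
      rw [this, ← inv_pow, ← mul_pow, ← mul_inv, Complex.I_mul_I, pow_mul]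
      norm_num
    have hp2 : (2 * (π : ℂ) * Complex.I)⁻¹ ^ (2 * k - 1) * (4 * (π : ℂ) * Complex.I)⁻¹ *
        (Complex.I ^ (2 * k))⁻¹ = 2 ^ m / π / (4 * (π : ℂ)) ^ (2 * k - 1) := by
      have e7 : (4 * (π : ℂ)) ^ (2 * k - 1) = 2 ^ (2 * k - 1) * (2 * (π : ℂ)) ^ (2 * k - 1) := by
        rw [← mul_pow]; congr 1; ring
      have e8 : (2 : ℂ) ^ (2 * k - 1) = 2 ^ m * 4 := by rw [a3, pow_add]; norm_num
      rw [e7, e8, mul_inv (2 * (π : ℂ)), mul_inv (4 * (π : ℂ)), mul_pow]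
      have e9 : ((2 * (π : ℂ))⁻¹) ^ (2 * k - 1) = ((2 * (π : ℂ)) ^ (2 * k - 1))⁻¹ := inv_pow _ _
      have hz : (2 * (π : ℂ)) ^ (2 * k - 1) ≠ 0 := pow_ne_zero _ (by simp [hpi])
      rw [e9]
      set Z := (2 * (π : ℂ)) ^ (2 * k - 1)
      have : Z⁻¹ * Complex.I⁻¹ ^ (2 * k - 1) * ((4 * (π : ℂ))⁻¹ * Complex.I⁻¹) *
          (Complex.I ^ (2 * k))⁻¹ = Z⁻¹ * (4 * (π : ℂ))⁻¹ * (Complex.I⁻¹ ^ (2 * k - 1) *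
          Complex.I⁻¹ * (Complex.I ^ (2 * k))⁻¹) := by ring
      rw [this, hp]
      field_simp
    have : (2 * (π : ℂ) * Complex.I)⁻¹ ^ (2 * k - 1) * ((2 * k - 1).factorial : ℂ) *
        ((4 * (π : ℂ) * Complex.I)⁻¹ * ((Complex.I ^ (2 * k))⁻¹ * (Complex.I ^ (e + 1))⁻¹ *
        (-1) ^ (n + 1) * β * T)) = ((2 * (π : ℂ) * Complex.I)⁻¹ ^ (2 * k - 1) *
        (4 * (π : ℂ) * Complex.I)⁻¹ * (Complex.I ^ (2 * k))⁻¹) *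
        (((2 * k - 1).factorial : ℂ) * β) * ((Complex.I ^ (e + 1))⁻¹ * (-1) ^ (n + 1) * T) := by
      ring
    rw [this, hp2, f1, div_eq_mul_inv (2 ^ m : ℂ) (_ * _ * _), mul_inv, mul_inv]
    ring

end LHMF
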